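/- arXiv:2303.17936 — 2 statements merged into one kernel-verified Lean document; each statement's English description precedes it below -/
import Mathlib

section
/- The unique weight-two newform on Γ₀(11), f(τ) = q ∏_{n≥1}(1−qⁿ)²(1−q¹¹ⁿ)², satisfies the algebraic relation between its differential invariants: for every τ ∈ ℍ, J₂⁴ + 32(I₂ − 8)(I₂² + 72I₂ − 944)J₂² + 256(I₂ + 8)(I₂³ + 152I₂² − 704I₂ + 1168)(I₂ − 8)² = 0, where I₂ = (2ff'' − 3(f')²)/f⁴ and J₂ = (4f²f''' − 24ff'f'' + 24(f')³)/f⁶. -/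
open Complex

noncomputable section

/-- The normalized derivative `F' = (2πi)⁻¹ dF/dτ`. -/
def nderiv (F : ℂ → ℂ) : ℂ → ℂ := fun τ => (2 * Real.pi * Complex.I)⁻¹ * deriv F τ

/-- `q = e^{2πiτ}`. -/
def qq (τ : ℂ) : ℂ := Complex.exp (2 * Real.pi * Complex.I * τ)

/-- The differential invariant `I₂ = (2ff'' − 3(f')²)/f⁴`. -/
def I2 (f : ℂ → ℂ) : ℂ → ℂ := fun τ =>
  (2 * f τ * nderiv (nderiv f) τ - 3 * (nderiv f τ) ^ 2) / f τ ^ 4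

/-- The differential invariant `J₂ = (4f²f''' − 24ff'f'' + 24(f')³)/f⁶`. -/
def J2 (f : ℂ → ℂ) : ℂ → ℂ := fun τ =>
  (4 * f τ ^ 2 * nderiv (nderiv (nderiv f)) τ -
    24 * f τ * nderiv f τ * nderiv (nderiv f) τ + 24 * (nderiv f τ) ^ 3) / f τ ^ 6

/-- The unique weight-two newform on `Γ₀(11)`,
`f(τ) = q ∏_{n≥1} (1−qⁿ)²(1−q¹¹ⁿ)²`. -/
def f11 : ℂ → ℂ := fun τ =>
  qq τ * ∏' n : ℕ, ((1 - qq τ ^ (n + 1)) ^ 2 * (1 - qq τ ^ (11 * (n + 1))) ^ 2)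

/-! If `f` has weight two under `g`, up to a multiplier `μ` with `(μ * det g) ^ 2 = 1`, then `I₂`
and `J₂ ^ 2` are invariant under `g`: the terms produced by the derivatives of the automorphy factor
cancel in `I₂`, and `J₂ = 2 I₂' / f`. For the newform `f` this applies to `Γ₀(11)` and to the Fricke
involution, because `f(τ) = η(τ)² η(11τ)²`. As `η` has no zeros, the left-hand side of the relation
is a modular function of weight `0` that is holomorphic on `ℍ`. Finitely many `q`-coefficients show
that it vanishes at the cusp `∞`, and the Fricke involution, which interchanges the two cusps, shows
that it vanishes at `0` as well. It is therefore constant, hence zero. -/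

open UpperHalfPlane hiding I
open Filter Topology
open scoped MatrixGroups ModularForm

section DifferentialInvariants

variable {f u v : ℂ → ℂ} {g : GL (Fin 2) ℝ} {μ : ℂ}

lemma two_pi_I_mul_nderiv (f : ℂ → ℂ) (τ : ℂ) : 2 * Real.pi * I * nderiv f τ = deriv f τ :=
  mul_inv_cancel_left₀ two_pi_I_ne_zero _

lemma differentiableOn_nderiv (hf : DifferentiableOn ℂ f upperHalfPlaneSet) :
    DifferentiableOn ℂ (nderiv f) upperHalfPlaneSet :=
  (hf.deriv isOpen_upperHalfPlaneSet).const_mul _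

lemma differentiableOn_I2 (hf : DifferentiableOn ℂ f upperHalfPlaneSet)
    (hf₀ : ∀ z ∈ upperHalfPlaneSet, f z ≠ 0) :
    DifferentiableOn ℂ (I2 f) upperHalfPlaneSet := by
  have hf₁ := differentiableOn_nderiv hf
  have hf₂ := differentiableOn_nderiv hf₁
  exact .div (by fun_prop) (by fun_prop) fun z hz ↦ pow_ne_zero _ (hf₀ z hz)

lemma differentiableOn_J2 (hf : DifferentiableOn ℂ f upperHalfPlaneSet)
    (hf₀ : ∀ z ∈ upperHalfPlaneSet, f z ≠ 0) :
    DifferentiableOn ℂ (J2 f) upperHalfPlaneSet := by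
  have hf₁ := differentiableOn_nderiv hf
  have hf₂ := differentiableOn_nderiv hf₁
  have hf₃ := differentiableOn_nderiv hf₂
  exact .div (by fun_prop) (by fun_prop) fun z hz ↦ pow_ne_zero _ (hf₀ z hz)

lemma differentiableAt_of_differentiableOn_upperHalfPlaneSet
    (hf : DifferentiableOn ℂ f upperHalfPlaneSet) (z : ℍ) : DifferentiableAt ℂ f z :=
  hf.differentiableAt (isOpen_upperHalfPlaneSet.mem_nhds z.im_pos)

lemma J2_eq_two_mul_nderiv_I2_div (hf : DifferentiableOn ℂ f upperHalfPlaneSet) (z : ℍ)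
    (hz : f z ≠ 0) : J2 f z = 2 * nderiv (I2 f) z / f z := by
  have hasDeriv {h : ℂ → ℂ} (hh : DifferentiableOn ℂ h upperHalfPlaneSet) :
      HasDerivAt h (2 * Real.pi * I * nderiv h z) z := by
    rw [two_pi_I_mul_nderiv]
    exact (differentiableAt_of_differentiableOn_upperHalfPlaneSet hh z).hasDerivAt
  have d₀ := hasDeriv hf
  have d₁ := hasDeriv (differentiableOn_nderiv hf)
  have d₂ := hasDeriv (differentiableOn_nderiv (differentiableOn_nderiv hf))
  have dI : HasDerivAt (I2 f) _ z :=
    (((d₀.const_mul 2).fun_mul d₂).fun_sub ((d₁.fun_pow 2).const_mul 3)).fun_div (d₀.fun_pow 4)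
      (pow_ne_zero 4 hz)
  rw [nderiv, dI.deriv, J2]
  have hπ := two_pi_I_ne_zero
  generalize (2 * Real.pi * I : ℂ) = p at *
  field_simp
  push_cast
  ring

lemma nderiv_mul (z : ℂ) (hu : DifferentiableAt ℂ u z) (hv : DifferentiableAt ℂ v z) :
    nderiv (fun w ↦ u w * v w) z = nderiv u z * v z + u z * nderiv v z := by
  simp only [nderiv, deriv_fun_mul hu hv]
  ring

lemma nderiv_add (z : ℂ) (hu : DifferentiableAt ℂ u z) (hv : DifferentiableAt ℂ v z) :
    nderiv (fun w ↦ u w + v w) z = nderiv u z + nderiv v z := by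
  simp only [nderiv, deriv_fun_add hu hv, mul_add]

lemma nderiv_const_mul (c : ℂ) (u : ℂ → ℂ) (z : ℂ) :
    nderiv (fun w ↦ c * u w) z = c * nderiv u z := by
  simp only [nderiv, deriv_const_mul_field]
  ring

lemma hasDerivAt_denom (g : GL (Fin 2) ℝ) (z : ℂ) : HasDerivAt (fun w ↦ denom g w) (g 1 0) z := by
  simpa [denom] using ((hasDerivAt_id z).const_mul (g 1 0 : ℂ)).add_const (g 1 1 : ℂ)

lemma nderiv_denom_pow (g : GL (Fin 2) ℝ) (n : ℕ) (z : ℂ) :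
    nderiv (fun w ↦ denom g w ^ n) z =
      n * (g 1 0 / (2 * Real.pi * I)) * denom g z ^ (n - 1) := by
  rw [nderiv, ((hasDerivAt_denom g z).fun_pow n).deriv]
  ring

lemma nderiv_smul_of_forall_smul_eq (hg : 0 < g.val.det)
    (hu : DifferentiableOn ℂ u upperHalfPlaneSet)
    (huv : ∀ z : ℍ, u ↑(g • z) = v z) (z : ℍ) :
    nderiv u ↑(g • z) = denom g z ^ 2 / g.val.det * nderiv v z := by
  have hsmul := (hasStrictDerivAt_smul hg z).hasDerivAt
  have hcomp : HasDerivAt (fun w ↦ u ↑(g • ofComplex w))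
      (deriv u ↑(g • z) * (g.val.det / denom g z ^ 2)) z := by
    have hu' := (differentiableAt_of_differentiableOn_upperHalfPlaneSet hu (g • z)).hasDerivAt
    rw [← ofComplex_apply z] at hu'
    simpa [Function.comp_def] using hu'.comp (z : ℂ) hsmul
  have hcongr : (fun w ↦ u ↑(g • ofComplex w)) =ᶠ[𝓝 ↑z] v := by
    filter_upwards [isOpen_upperHalfPlaneSet.mem_nhds z.im_pos] with w hw
    rw [huv, ofComplex_apply_of_im_pos hw]
  have hdenom := denom_ne_zero g z
  have hdet : (g.val.det : ℂ) ≠ 0 := mod_cast hg.ne'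
  rw [nderiv, nderiv, ← hcongr.deriv_eq, hcomp.deriv]
  field_simp

lemma nderiv_smul_of_weight_two (hg : 0 < g.val.det) (hf : DifferentiableOn ℂ f upperHalfPlaneSet)
    (hfg : ∀ z : ℍ, f ↑(g • z) = μ * (denom g z ^ 2 * f z)) (z : ℍ) :
    nderiv f ↑(g • z) = μ / g.val.det *
      (2 * (g 1 0 / (2 * Real.pi * I)) * (denom g z ^ 3 * f z) + denom g z ^ 4 * nderiv f z) := by
  have hf' := differentiableAt_of_differentiableOn_upperHalfPlaneSet hf z
  have hd := (hasDerivAt_denom g z).differentiableAt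
  rw [nderiv_smul_of_forall_smul_eq (v := fun w ↦ μ * (denom g w ^ 2 * f w)) hg hf hfg,
    nderiv_const_mul, nderiv_mul _ (hd.fun_pow 2) hf', nderiv_denom_pow]
  push_cast
  ring

lemma nderiv_nderiv_smul_of_weight_two (hg : 0 < g.val.det)
    (hf : DifferentiableOn ℂ f upperHalfPlaneSet)
    (hfg : ∀ z : ℍ, f ↑(g • z) = μ * (denom g z ^ 2 * f z)) (z : ℍ) :
    nderiv (nderiv f) ↑(g • z) = μ / g.val.det ^ 2 *
      (6 * (g 1 0 / (2 * Real.pi * I)) ^ 2 * (denom g z ^ 4 * f z) +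
        6 * (g 1 0 / (2 * Real.pi * I)) * (denom g z ^ 5 * nderiv f z) +
        denom g z ^ 6 * nderiv (nderiv f) z) := by
  have hf₁ := differentiableOn_nderiv hf
  have hfz := differentiableAt_of_differentiableOn_upperHalfPlaneSet hf z
  have hf₁z := differentiableAt_of_differentiableOn_upperHalfPlaneSet hf₁ z
  have hd := (hasDerivAt_denom g z).differentiableAt
  rw [nderiv_smul_of_forall_smul_eq (v := fun w ↦ μ / g.val.det *
      (2 * (g 1 0 / (2 * Real.pi * I)) * (denom g w ^ 3 * f w) + denom g w ^ 4 * nderiv f w))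
      hg hf₁ (nderiv_smul_of_weight_two hg hf hfg),
    nderiv_const_mul, nderiv_add _ (by fun_prop) (by fun_prop), nderiv_const_mul,
    nderiv_mul _ (by fun_prop) hfz, nderiv_mul _ (by fun_prop) hf₁z, nderiv_denom_pow,
    nderiv_denom_pow]
  push_cast
  ring

theorem I2_smul_of_weight_two (hg : 0 < g.val.det) (hf : DifferentiableOn ℂ f upperHalfPlaneSet)
    (hfg : ∀ z : ℍ, f ↑(g • z) = μ * (denom g z ^ 2 * f z))
    (hμ : (μ * g.val.det) ^ 2 = 1) (z : ℍ) :
    I2 f ↑(g • z) = I2 f z := by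
  have hD : (g.val.det : ℂ) ≠ 0 := mod_cast hg.ne'
  have hμ₀ : μ ≠ 0 := by
    rintro rfl
    simp at hμ
  have hu := denom_ne_zero g z
  calc I2 f ↑(g • z) = (μ * denom g z ^ 4 / g.val.det) ^ 2 *
        (2 * f z * nderiv (nderiv f) z - 3 * nderiv f z ^ 2) / (μ * (denom g z ^ 2 * f z)) ^ 4 := by
        rw [I2, hfg, nderiv_smul_of_weight_two hg hf hfg,
          nderiv_nderiv_smul_of_weight_two hg hf hfg]
        ring
    _ = I2 f z / (μ * g.val.det) ^ 2 := by
        rw [I2]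
        field_simp
    _ = I2 f z := by rw [hμ, div_one]

theorem J2_sq_smul_of_weight_two (hg : 0 < g.val.det) (hf : DifferentiableOn ℂ f upperHalfPlaneSet)
    (hfg : ∀ z : ℍ, f ↑(g • z) = μ * (denom g z ^ 2 * f z))
    (hμ : (μ * g.val.det) ^ 2 = 1)
    (hf₀ : ∀ z ∈ upperHalfPlaneSet, f z ≠ 0) (z : ℍ) :
    J2 f ↑(g • z) ^ 2 = J2 f z ^ 2 := by
  have hD : (g.val.det : ℂ) ≠ 0 := mod_cast hg.ne'
  have hu := denom_ne_zero g z
  calc J2 f ↑(g • z) ^ 2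
      = (2 * (denom g z ^ 2 / g.val.det * nderiv (I2 f) z) / (μ * (denom g z ^ 2 * f z))) ^ 2 := by
        rw [J2_eq_two_mul_nderiv_I2_div hf _ (hf₀ _ (g • z).im_pos), hfg,
          nderiv_smul_of_forall_smul_eq hg (differentiableOn_I2 hf hf₀)
            (I2_smul_of_weight_two hg hf hfg hμ)]
    _ = J2 f z ^ 2 / (μ * g.val.det) ^ 2 := by
        rw [J2_eq_two_mul_nderiv_I2_div hf _ (hf₀ z z.im_pos)]
        field_simp
    _ = J2 f z ^ 2 := by rw [hμ, div_one]

end DifferentialInvariants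

section EtaMultiplier

/-- A polynomial representing the exponent of the multiplier system of `η²` modulo `12`, as a
function of the entries of a matrix `!![a, b; c, d]` of determinant one. -/
def etaSqPoly (a b c d : ZMod 12) : ZMod 12 :=
  (1 - c ^ 2) * (b * d + 3 * (c - 1) * d + c + 3) + c * (a + d - 3)

set_option maxRecDepth 100000 in
lemma etaSqPoly_relations : ∀ a b c d : ZMod 12, a * d - b * c = 1 →
    etaSqPoly a (a + b) c (c + d) = etaSqPoly a b c d + 1 ∧
    etaSqPoly b (-a) d (-c) = etaSqPoly a b c d - 3 ∧
    etaSqPoly a (-b) (-c) d = -etaSqPoly a b c d := by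
  decide +kernel

lemma cast_det_eq_one (R : Type*) [CommRing R] (γ : SL(2, ℤ)) :
    (γ 0 0 : R) * γ 1 1 - γ 0 1 * γ 1 0 = 1 := by
  have := γ.det_coe
  rw [Matrix.det_fin_two] at this
  exact_mod_cast congrArg (Int.cast : ℤ → R) this

/-- The exponent `k` in the transformation law `η² ∣[1] γ = exp(2πik/12) η²`. -/
def etaSqExponent (γ : SL(2, ℤ)) : ZMod 12 :=
  etaSqPoly (γ 0 0) (γ 0 1) (γ 1 0) (γ 1 1)

lemma etaSqExponent_mul_T (γ : SL(2, ℤ)) :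
    etaSqExponent (γ * ModularGroup.T) = etaSqExponent γ + 1 := by
  rw [etaSqExponent, etaSqExponent, ← (etaSqPoly_relations _ _ _ _ (cast_det_eq_one _ γ)).1]
  simp [Matrix.SpecialLinearGroup.coe_mul, ModularGroup.coe_T, Matrix.mul_apply]

lemma etaSqExponent_mul_S (γ : SL(2, ℤ)) :
    etaSqExponent (γ * ModularGroup.S) = etaSqExponent γ + (-3) := by
  rw [etaSqExponent, etaSqExponent, ← sub_eq_add_neg,
    ← (etaSqPoly_relations _ _ _ _ (cast_det_eq_one _ γ)).2.1]
  simp [Matrix.SpecialLinearGroup.coe_mul, ModularGroup.coe_S, Matrix.mul_apply]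

/-- The square of the Dedekind eta function, of weight one. -/
def etaSq (z : ℍ) : ℂ := ModularForm.eta z ^ 2

lemma eta_one_add_sq (z : ℂ) :
    ModularForm.eta (1 + z) ^ 2 = ZMod.stdAddChar (1 : ZMod 12) * ModularForm.eta z ^ 2 := by
  have hprod (n : ℕ) : ModularForm.eta_q n (1 + z) = ModularForm.eta_q n z := by
    simp [ModularForm.eta_q, Function.Periodic.qParam, mul_add, Complex.exp_add]
  have hq : Function.Periodic.qParam 24 (1 + z) ^ 2 =
      ZMod.stdAddChar (1 : ZMod 12) * Function.Periodic.qParam 24 z ^ 2 := by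
    rw [← Int.cast_one (R := ZMod 12), ZMod.stdAddChar_coe]
    simp only [Function.Periodic.qParam, ← Complex.exp_nat_mul, ← Complex.exp_add]
    push_cast
    ring_nf
  simp only [ModularForm.eta, hprod, mul_pow, hq, mul_assoc]

lemma complex_sqrt_sq {w : ℂ} (hw : w ≠ 0) : sqrt w ^ 2 = w := by
  rw [sqrt_eq_exp hw, ← exp_nat_mul]
  push_cast
  rw [mul_div_cancel₀ _ two_ne_zero, exp_log hw]

lemma eta_neg_one_div_sq {z : ℂ} (hz : 0 < z.im) :
    ModularForm.eta (-1 / z) ^ 2 = -I * z * ModularForm.eta z ^ 2 := by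
  have hz₀ : z ≠ 0 := by
    rintro rfl
    simp at hz
  have heta := ModularForm.eta_comp_eq_csqrt_I_inv hz
  simp only [Function.comp_apply, Pi.smul_apply, Pi.mul_apply, smul_eq_mul] at heta
  rw [heta, mul_pow, mul_pow, inv_pow, complex_sqrt_sq hz₀, complex_sqrt_sq I_ne_zero, inv_I,
    mul_assoc]

lemma etaSq_slash_T :
    etaSq ∣[(1 : ℤ)] ModularGroup.T = ZMod.stdAddChar (1 : ZMod 12) • etaSq := by
  ext z
  have hdenom : denom (ModularGroup.T : SL(2, ℤ)) z = 1 := by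
    simp [ModularGroup.denom_apply, ModularGroup.coe_T]
  rw [ModularForm.SL_slash_apply, modular_T_smul, hdenom]
  simp [etaSq, eta_one_add_sq]

lemma etaSq_slash_S :
    etaSq ∣[(1 : ℤ)] ModularGroup.S = ZMod.stdAddChar (-3 : ZMod 12) • etaSq := by
  ext z
  have hchar : ZMod.stdAddChar (-3 : ZMod 12) = -I := by
    have h := ZMod.stdAddChar_coe (N := 12) (-3)
    push_cast at h
    rw [h, show 2 * (Real.pi : ℂ) * I * -3 / 12 = -(Real.pi / 2 * I) by ring, Complex.exp_neg,
      exp_pi_div_two_mul_I, inv_I]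
  have hz := z.ne_zero
  have hS : ((ModularGroup.S • z : ℍ) : ℂ) = -1 / z := by
    rw [modular_S_smul]
    simp [neg_div]
  rw [ModularForm.SL_slash_apply, etaSq, hS, eta_neg_one_div_sq z.im_pos, ModularGroup.denom_S,
    Pi.smul_apply, smul_eq_mul, hchar, etaSq]
  field_simp

lemma etaSq_slash_mul_iff {γ g : SL(2, ℤ)} {k : ZMod 12}
    (hg : etaSq ∣[(1 : ℤ)] g = ZMod.stdAddChar k • etaSq)
    (hk : etaSqExponent (γ * g) = etaSqExponent γ + k) :
    etaSq ∣[(1 : ℤ)] (γ * g) = ZMod.stdAddChar (etaSqExponent (γ * g)) • etaSq ↔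
      etaSq ∣[(1 : ℤ)] γ = ZMod.stdAddChar (etaSqExponent γ) • etaSq := by
  rw [hk, AddChar.map_add_eq_mul, mul_smul, ← hg, ← ModularForm.SL_smul_slash,
    SlashAction.slash_mul]
  refine ⟨fun h ↦ ?_, fun h ↦ by rw [h]⟩
  simpa [← SlashAction.slash_mul] using congrArg (· ∣[(1 : ℤ)] g⁻¹) h

lemma etaSq_slash (γ : SL(2, ℤ)) :
    etaSq ∣[(1 : ℤ)] γ = ZMod.stdAddChar (etaSqExponent γ) • etaSq := by
  have hS (γ : SL(2, ℤ)) := etaSq_slash_mul_iff etaSq_slash_S (etaSqExponent_mul_S γ)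
  have hT (γ : SL(2, ℤ)) := etaSq_slash_mul_iff etaSq_slash_T (etaSqExponent_mul_T γ)
  have hγ : γ ∈ Subgroup.closure {ModularGroup.S, ModularGroup.T} := by
    simp [SpecialLinearGroup.SL2Z_generators]
  induction hγ using Subgroup.closure_induction_right with
  | one => simp [etaSqExponent, etaSqPoly]
  | mul_right γ _ g hg ih =>
    rcases hg with rfl | rfl
    exacts [(hS γ).2 ih, (hT γ).2 ih]
  | mul_inv_cancel γ _ g hg ih =>
    rcases hg with rfl | rfl
    exacts [(hS _).1 (by rwa [inv_mul_cancel_right]), (hT _).1 (by rwa [inv_mul_cancel_right])]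

end EtaMultiplier

section Newform

/-- Euler's product `∏_{n≥1} (1 - qⁿ)`. -/
def eulerProduct (q : ℂ) : ℂ := ∏' n : ℕ, (1 - q ^ (n + 1))

/-- The newform `f11` as a function of `q`. -/
def f11OfQ (q : ℂ) : ℂ :=
  q * ∏' n : ℕ, ((1 - q ^ (n + 1)) ^ 2 * (1 - q ^ (11 * (n + 1))) ^ 2)

lemma f11_eq_comp_qq : f11 = f11OfQ ∘ qq := rfl

lemma norm_qq_lt_one {τ : ℂ} (hτ : 0 < τ.im) : ‖qq τ‖ < 1 := by
  simpa [qq] using norm_exp_two_pi_I_lt_one ⟨τ, hτ⟩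

lemma f11OfQ_eq {q : ℂ} (hq : ‖q‖ < 1) :
    f11OfQ q = q * (eulerProduct q ^ 2 * eulerProduct (q ^ 11) ^ 2) := by
  have h₁ := ModularForm.multipliable_one_sub_pow hq
  have h₂ := ModularForm.multipliable_one_sub_pow (q := q ^ 11) <| by
    simpa using pow_lt_one₀ (norm_nonneg q) hq (by norm_num : 11 ≠ 0)
  rw [f11OfQ, eulerProduct, eulerProduct, ← h₁.tprod_pow, ← h₂.tprod_pow,
    ← (h₁.pow 2).tprod_mul (h₂.pow 2)]
  simp only [pow_mul]

lemma im_eleven_mul_pos {τ : ℂ} (hτ : 0 < τ.im) : 0 < (11 * τ).im := by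
  simpa using hτ

lemma f11_eq_eta {τ : ℂ} (hτ : 0 < τ.im) :
    f11 τ = ModularForm.eta τ ^ 2 * ModularForm.eta (11 * τ) ^ 2 := by
  have hprod (t : ℂ) : ∏' n : ℕ, (1 - ModularForm.eta_q n t) = eulerProduct (qq t) := by
    simp only [eulerProduct, ModularForm.eta_q_eq_pow, qq]
  have hpow : qq (11 * τ) = qq τ ^ 11 := by
    simp only [qq, ← Complex.exp_nat_mul]
    push_cast
    ring_nf
  have hlead : Function.Periodic.qParam 24 τ ^ 2 * Function.Periodic.qParam 24 (11 * τ) ^ 2 =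
      qq τ := by
    simp only [Function.Periodic.qParam, qq, ← Complex.exp_nat_mul, ← Complex.exp_add]
    push_cast
    ring_nf
  rw [f11_eq_comp_qq, Function.comp_apply, f11OfQ_eq (norm_qq_lt_one hτ), ModularForm.eta,
    ModularForm.eta, hprod, hprod, hpow, ← hlead]
  ring

lemma f11_ne_zero {τ : ℂ} (hτ : τ ∈ upperHalfPlaneSet) : f11 τ ≠ 0 := by
  rw [f11_eq_eta hτ]
  exact mul_ne_zero (pow_ne_zero _ (ModularForm.eta_ne_zero hτ))
    (pow_ne_zero _ (ModularForm.eta_ne_zero (im_eleven_mul_pos hτ)))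

lemma differentiableOn_f11 : DifferentiableOn ℂ f11 upperHalfPlaneSet := by
  have heta {τ : ℂ} (hτ : 0 < τ.im) : DifferentiableAt ℂ ModularForm.eta τ :=
    ModularForm.differentiableAt_eta_of_mem_upperHalfPlaneSet hτ
  refine DifferentiableOn.congr (fun τ hτ ↦ ?_) fun τ hτ ↦ f11_eq_eta hτ
  have heta₁₁ : DifferentiableAt ℂ (fun w ↦ ModularForm.eta (11 * w)) τ :=
    (heta (im_eleven_mul_pos hτ)).comp τ (by fun_prop)
  exact (((heta hτ).fun_pow 2).mul (heta₁₁.fun_pow 2)).differentiableWithinAt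

lemma coe_smul_eq (γ : SL(2, ℤ)) (z : ℍ) :
    ((γ • z : ℍ) : ℂ) = (γ 0 0 * z + γ 0 1) / (γ 1 0 * z + γ 1 1) := by
  rw [coe_specialLinearGroup_apply]
  simp

lemma eta_smul_sq (γ : SL(2, ℤ)) (z : ℍ) : ModularForm.eta ↑(γ • z) ^ 2 =
    ZMod.stdAddChar (etaSqExponent γ) * (denom γ z * ModularForm.eta z ^ 2) := by
  have h := congrFun (etaSq_slash γ) z
  rw [ModularForm.SL_slash_apply, zpow_neg_one, ← div_eq_mul_inv,
    div_eq_iff (denom_ne_zero _ _)] at h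
  rw [← etaSq, h, Pi.smul_apply, smul_eq_mul, etaSq]
  ring

lemma exists_conj_eleven {γ : SL(2, ℤ)} (hγ : γ ∈ CongruenceSubgroup.Gamma0 11) :
    ∃ γ' : SL(2, ℤ), etaSqExponent γ' = -etaSqExponent γ ∧
      ∀ z w : ℍ, (w : ℂ) = 11 * z → (↑(γ' • w) : ℂ) = 11 * ↑(γ • z) ∧ denom γ' w = denom γ z := by
  obtain ⟨c, hc⟩ := (ZMod.intCast_zmod_eq_zero_iff_dvd _ 11).1 (CongruenceSubgroup.Gamma0_mem.1 hγ)
  push_cast at hc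
  have hdet := cast_det_eq_one ℤ γ
  have h11 : (11 : ZMod 12) = -1 := by decide
  obtain ⟨γ', hγ'⟩ : ∃ γ' : SL(2, ℤ), γ'.val = !![γ 0 0, 11 * γ 0 1; c, γ 1 1] := by
    refine ⟨⟨_, ?_⟩, rfl⟩
    rw [Matrix.det_fin_two_of]
    simp only [Int.cast_id, hc] at hdet
    linear_combination hdet
  refine ⟨γ', ?_, fun z w hw ↦ ⟨?_, ?_⟩⟩
  · rw [etaSqExponent, etaSqExponent,
      ← (etaSqPoly_relations _ _ _ _ (cast_det_eq_one _ γ)).2.2, hc]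
    simp [hγ', h11]
  · rw [coe_smul_eq, coe_smul_eq, hw, hc, hγ', mul_div_assoc']
    simp [mul_add, mul_left_comm, mul_assoc]
  · rw [ModularGroup.denom_apply, ModularGroup.denom_apply, hw, hc, hγ']
    simp [mul_left_comm, mul_assoc]

theorem f11_smul {γ : SL(2, ℤ)} (hγ : γ ∈ CongruenceSubgroup.Gamma0 11) (z : ℍ) :
    f11 ↑(γ • z) = denom γ z ^ 2 * f11 z := by
  obtain ⟨γ', hexp, hconj⟩ := exists_conj_eleven hγ
  obtain ⟨hsmul, hdenom⟩ := hconj z ⟨11 * z, im_eleven_mul_pos z.im_pos⟩ rfl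
  have hchar :
      ZMod.stdAddChar (etaSqExponent γ) * ZMod.stdAddChar (-etaSqExponent γ) = (1 : ℂ) := by
    rw [← AddChar.map_add_eq_mul, add_neg_cancel, AddChar.map_zero_eq_one]
  rw [f11_eq_eta (γ • z).im_pos, f11_eq_eta z.im_pos, ← hsmul, eta_smul_sq, eta_smul_sq, hexp,
    hdenom]
  linear_combination denom γ z ^ 2 * ModularForm.eta z ^ 2 * ModularForm.eta (11 * z) ^ 2 * hchar

/-- The matrix `!![0, -1; 11, 0]` of the Fricke involution `τ ↦ -1 / (11 * τ)` of level `11`. -/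
def fricke : GL (Fin 2) ℝ := .mkOfDetNeZero !![0, -1; 11, 0] (by simp)

lemma det_fricke : fricke.val.det = 11 := by
  simp [fricke, Matrix.GeneralLinearGroup.mkOfDetNeZero]

lemma denom_fricke (z : ℂ) : denom fricke z = 11 * z := by
  simp [denom, fricke, Matrix.GeneralLinearGroup.mkOfDetNeZero]

lemma coe_fricke_smul (z : ℍ) : (↑(fricke • z) : ℂ) = -1 / (11 * z) := by
  rw [coe_smul_of_det_pos (by simp [det_fricke]), denom_fricke]
  simp [num, fricke, Matrix.GeneralLinearGroup.mkOfDetNeZero]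

theorem f11_fricke_smul (z : ℍ) :
    f11 ↑(fricke • z) = -11⁻¹ * (denom fricke z ^ 2 * f11 z) := by
  have hz := z.ne_zero
  rw [f11_eq_eta (fricke • z).im_pos, f11_eq_eta z.im_pos, coe_fricke_smul, denom_fricke,
    eta_neg_one_div_sq (im_eleven_mul_pos z.im_pos), show 11 * (-1 / (11 * z : ℂ)) = -1 / z by
    field_simp, eta_neg_one_div_sq z.im_pos]
  linear_combination (11 * z ^ 2 * ModularForm.eta z ^ 2 * ModularForm.eta (11 * z) ^ 2) * I_sq

end Newform

section TruncatedSeries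

/-- Coefficients of an integral power series known modulo `q ^ N`; coefficients beyond the end of
the list are zero, those of index at least `N` carry no meaning. A list rather than a `PowerSeries`
makes the arithmetic computable. -/
structure TruncSeries (N : ℕ) where
  /-- The coefficients, starting with the constant one. -/
  coeffs : List ℤ

namespace TruncSeries

/-- Coefficientwise sum of two lists of coefficients. -/
def listAdd : List ℤ → List ℤ → List ℤ
  | [], b => b
  | a, [] => a
  | x :: a, y :: b => (x + y) :: listAdd a b

/-- Convolution product of two lists of coefficients. -/
def listMul : List ℤ → List ℤ → List ℤ
  | [], _ => []
  | x :: a, b => listAdd (b.map (x * ·)) (0 :: listMul a b)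

/-- Coefficients of `q d/dq` applied to a polynomial in `q`. -/
def listTheta : List ℤ → List ℤ
  | [] => []
  | _ :: a => 0 :: listAdd a (listTheta a)

/-- Coefficients of a polynomial in `q` after the substitution `q ↦ q ^ (k + 1)`. -/
def listExpand (k : ℕ) : List ℤ → List ℤ
  | [] => []
  | x :: a => x :: (List.replicate k 0 ++ listExpand k a)

/-- The value at `q` of the polynomial with the given coefficients. -/
def listEval (q : ℂ) : List ℤ → ℂ
  | [] => 0
  | x :: a => x + q * listEval q a

lemma listEval_add (q : ℂ) (a b : List ℤ) :
    listEval q (listAdd a b) = listEval q a + listEval q b := by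
  fun_induction listAdd a b with
  | case1 b => simp [listEval]
  | case2 a => simp [listEval]
  | case3 x a y b ih =>
    simp only [listEval, ih, Int.cast_add]
    ring

lemma listEval_map_mul (q : ℂ) (c : ℤ) (a : List ℤ) :
    listEval q (a.map (c * ·)) = c * listEval q a := by
  induction a with
  | nil => simp [listEval]
  | cons x a ih =>
    simp only [List.map_cons, listEval, ih, Int.cast_mul]
    ring

lemma listEval_mul (q : ℂ) (a b : List ℤ) :
    listEval q (listMul a b) = listEval q a * listEval q b := by
  induction a with
  | nil => simp [listMul, listEval]
  | cons x a ih =>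
    simp only [listMul, listEval_add, listEval_map_mul, listEval, ih, Int.cast_zero]
    ring

lemma listEval_append (q : ℂ) (a b : List ℤ) :
    listEval q (a ++ b) = listEval q a + q ^ a.length * listEval q b := by
  induction a with
  | nil => simp [listEval]
  | cons x a ih =>
    simp only [List.cons_append, listEval, ih, List.length_cons]
    ring

lemma listEval_eq_zero (q : ℂ) {a : List ℤ} (ha : ∀ x ∈ a, x = 0) : listEval q a = 0 := by
  induction a with
  | nil => rfl
  | cons x a ih => simp_all [listEval]

lemma listEval_expand (q : ℂ) (k : ℕ) (a : List ℤ) :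
    listEval q (listExpand k a) = listEval (q ^ (k + 1)) a := by
  induction a with
  | nil => rfl
  | cons x a ih =>
    have hzero : listEval q (List.replicate k 0) = 0 := listEval_eq_zero q (by simp)
    simp only [listExpand, listEval, listEval_append, hzero, ih, List.length_replicate]
    ring

lemma exists_hasDerivAt_listEval (a : List ℤ) (q : ℂ) :
    ∃ d, HasDerivAt (listEval · a) d q ∧ q * d = listEval q (listTheta a) := by
  induction a with
  | nil => exact ⟨0, hasDerivAt_const q 0, by simp [listTheta, listEval]⟩
  | cons x a ih =>
    obtain ⟨d, hd, hqd⟩ := ih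
    refine ⟨_, ((hasDerivAt_id' q).fun_mul hd).const_add (x : ℂ), ?_⟩
    simp only [listTheta, listEval, listEval_add, ← hqd, Int.cast_zero]
    ring

lemma listEval_eq_take_add_drop (q : ℂ) (n : ℕ) (a : List ℤ) :
    listEval q a = listEval q (a.take n) + q ^ n * listEval q (a.drop n) := by
  induction n generalizing a with
  | zero => simp [listEval]
  | succ n ih =>
    cases a with
    | nil => simp [listEval]
    | cons x a =>
      simp only [List.take_succ_cons, List.drop_succ_cons, listEval, ih a]
      ring

lemma analyticAt_listEval (a : List ℤ) (q : ℂ) : AnalyticAt ℂ (listEval · a) q := by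
  induction a with
  | nil => exact analyticAt_const
  | cons x a ih => exact analyticAt_const.add (analyticAt_id.mul ih)

variable {N : ℕ}

instance : Add (TruncSeries N) := ⟨fun a b ↦ ⟨listAdd a.coeffs b.coeffs⟩⟩
instance : Mul (TruncSeries N) := ⟨fun a b ↦ ⟨(listMul a.coeffs b.coeffs).take N⟩⟩
instance : SMul ℤ (TruncSeries N) := ⟨fun c a ↦ ⟨a.coeffs.map (c * ·)⟩⟩

/-- The operator `θ = q d/dq` on truncated series. -/
def theta (a : TruncSeries N) : TruncSeries N := ⟨listTheta a.coeffs⟩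

/-- The substitution `q ↦ q ^ (k + 1)` on truncated series. -/
def expand (k : ℕ) (a : TruncSeries N) : TruncSeries N := ⟨listExpand k a.coeffs⟩

end TruncSeries

open TruncSeries

/-- The operator `θ = q d/dq`, through which `nderiv` acts on functions of `q = e^{2πiτ}`. -/
def thetaOp (g : ℂ → ℂ) (q : ℂ) : ℂ := q * deriv g q

/-- The function `g` is analytic at `0`, with Taylor coefficients given by `a` modulo `q ^ N`. -/
def HasExpansion {N : ℕ} (g : ℂ → ℂ) (a : TruncSeries N) : Prop :=
  ∃ h : ℂ → ℂ, AnalyticAt ℂ h 0 ∧ ∀ᶠ q in 𝓝 0, g q = listEval q a.coeffs + q ^ N * h q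

namespace HasExpansion

variable {N : ℕ} {g g₁ g₂ : ℂ → ℂ} {a a₁ a₂ : TruncSeries N}

lemma congr (hg₁ : HasExpansion g₁ a) (h : g₂ =ᶠ[𝓝 0] g₁) : HasExpansion g₂ a := by
  obtain ⟨r, hr, hgr⟩ := hg₁
  exact ⟨r, hr, h.trans hgr⟩

lemma of_listEval {l : List ℤ} (h : ∀ q, g q = listEval q l) :
    HasExpansion g (⟨l⟩ : TruncSeries N) :=
  ⟨0, analyticAt_const, .of_forall fun q ↦ by simp [h]⟩

lemma add (h₁ : HasExpansion g₁ a₁) (h₂ : HasExpansion g₂ a₂) :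
    HasExpansion (g₁ + g₂) (a₁ + a₂) := by
  obtain ⟨r₁, hr₁, hg₁⟩ := h₁
  obtain ⟨r₂, hr₂, hg₂⟩ := h₂
  refine ⟨r₁ + r₂, hr₁.add hr₂, ?_⟩
  filter_upwards [hg₁, hg₂] with q hq₁ hq₂
  have ha : listEval q (a₁ + a₂).coeffs = _ := listEval_add q a₁.coeffs a₂.coeffs
  rw [ha, Pi.add_apply, hq₁, hq₂, Pi.add_apply]
  ring

lemma smul (c : ℤ) (h : HasExpansion g a) : HasExpansion (c • g) (c • a) := by
  obtain ⟨r, hr, hg⟩ := h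
  refine ⟨fun q ↦ c * r q, analyticAt_const.mul hr, ?_⟩
  filter_upwards [hg] with q hq
  have ha : listEval q (c • a).coeffs = _ := listEval_map_mul q c a.coeffs
  rw [ha, Pi.smul_apply, zsmul_eq_mul, hq]
  ring

lemma mul (h₁ : HasExpansion g₁ a₁) (h₂ : HasExpansion g₂ a₂) :
    HasExpansion (g₁ * g₂) (a₁ * a₂) := by
  obtain ⟨r₁, hr₁, hg₁⟩ := h₁
  obtain ⟨r₂, hr₂, hg₂⟩ := h₂
  refine ⟨fun q ↦ listEval q ((listMul a₁.coeffs a₂.coeffs).drop N) + listEval q a₁.coeffs * r₂ q +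
    r₁ q * (listEval q a₂.coeffs + q ^ N * r₂ q), ?_, ?_⟩
  · have := analyticAt_listEval a₁.coeffs 0
    have := analyticAt_listEval a₂.coeffs 0
    have := analyticAt_listEval ((listMul a₁.coeffs a₂.coeffs).drop N) 0
    fun_prop
  · filter_upwards [hg₁, hg₂] with q hq₁ hq₂
    have hmul := listEval_eq_take_add_drop q N (listMul a₁.coeffs a₂.coeffs)
    rw [listEval_mul] at hmul
    rw [Pi.mul_apply, hq₁, hq₂]
    change _ = listEval q ((listMul a₁.coeffs a₂.coeffs).take N) + _
    linear_combination hmul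

lemma theta (h : HasExpansion g a) : HasExpansion (thetaOp g) a.theta := by
  obtain ⟨r, hr, hg⟩ := h
  refine ⟨fun q ↦ N * r q + q * deriv r q, ?_, ?_⟩
  · have := hr.deriv
    fun_prop
  · filter_upwards [hg.eventually_nhds, hr.eventually_analyticAt] with q hgq hrq
    obtain ⟨d, hd, hqd⟩ := exists_hasDerivAt_listEval a.coeffs q
    have hderiv := hd.fun_add ((hasDerivAt_pow N q).fun_mul hrq.differentiableAt.hasDerivAt)
    rw [thetaOp, EventuallyEq.deriv_eq hgq, hderiv.deriv, TruncSeries.theta, ← hqd]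
    rcases N with - | n
    · simp only [CharP.cast_eq_zero, zero_tsub, pow_zero, mul_one, zero_mul, one_mul, zero_add]
      ring
    · simp only [Nat.add_sub_cancel]
      ring

lemma comp_pow (h : HasExpansion g a) (k : ℕ) :
    HasExpansion (fun q ↦ g (q ^ (k + 1))) (a.expand k) := by
  obtain ⟨r, hr, hg⟩ := h
  have hpow : Tendsto (fun q : ℂ ↦ q ^ (k + 1)) (𝓝 0) (𝓝 0) := by
    simpa using (continuous_pow (k + 1)).tendsto (0 : ℂ)
  refine ⟨fun q ↦ q ^ (N * k) * r (q ^ (k + 1)), ?_, ?_⟩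
  · have hr' : AnalyticAt ℂ r (0 ^ (k + 1)) := by simpa using hr
    exact (analyticAt_id.pow _).mul (hr'.comp_of_eq (analyticAt_id.pow (k + 1)) rfl)
  · filter_upwards [hpow.eventually hg] with q hq
    rw [hq, TruncSeries.expand, listEval_expand]
    ring

end HasExpansion

lemma exists_eq_pow_mul_of_isBigO {g : ℂ → ℂ} (hg : AnalyticAt ℂ g 0) {n : ℕ}
    (hO : g =O[𝓝 0] fun q ↦ q ^ n) :
    ∃ h : ℂ → ℂ, AnalyticAt ℂ h 0 ∧ ∀ᶠ q in 𝓝 0, g q = q ^ n * h q := by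
  suffices hn : n ≤ analyticOrderAt g 0 by
    simpa using (natCast_le_analyticOrderAt hg).1 hn
  by_contra! hlt
  obtain ⟨m, hm⟩ := ENat.ne_top_iff_exists.1 hlt.ne_top
  obtain ⟨k, hk, hk₀, hgk⟩ := hg.analyticOrderAt_eq_natCast.1 hm.symm
  have hmn : m < n := by exact_mod_cast hm ▸ hlt
  have hlittle : g =o[𝓝 0] fun q ↦ q ^ m := hO.trans_isLittleO (Asymptotics.isLittleO_pow_pow hmn)
  have hquot : (fun q ↦ g q / q ^ m) =ᶠ[𝓝[≠] 0] k := by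
    filter_upwards [hgk.filter_mono nhdsWithin_le_nhds, self_mem_nhdsWithin] with q hq hq₀
    rw [hq, sub_zero, smul_eq_mul, mul_div_cancel_left₀ _ (pow_ne_zero m hq₀)]
  have hlim : Tendsto k (𝓝[≠] 0) (𝓝 0) :=
    (hlittle.tendsto_div_nhds_zero.mono_left nhdsWithin_le_nhds).congr' hquot
  exact hk₀ (tendsto_nhds_unique (hk.continuousAt.tendsto.mono_left nhdsWithin_le_nhds) hlim)

lemma HasExpansion.of_isBigO {N : ℕ} {g₁ g₂ : ℂ → ℂ} {a : TruncSeries N}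
    (h₁ : HasExpansion g₁ a) (hg : AnalyticAt ℂ (g₂ - g₁) 0)
    (hO : (g₂ - g₁) =O[𝓝 0] fun q ↦ q ^ N) : HasExpansion g₂ a := by
  obtain ⟨r, hr, hg₁⟩ := h₁
  obtain ⟨s, hs, hdiff⟩ := exists_eq_pow_mul_of_isBigO hg hO
  refine ⟨r + s, hr.add hs, ?_⟩
  filter_upwards [hg₁, hdiff] with q hq₁ hq
  rw [Pi.sub_apply, hq₁] at hq
  rw [Pi.add_apply]
  linear_combination hq

end TruncatedSeries

section NewformExpansion

open TruncSeries

/-- The partial Euler product `∏_{1≤i≤n} (1 - qⁱ)` as a truncated series. -/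
def eulerPartial {N : ℕ} : ℕ → TruncSeries N
  | 0 => ⟨[1]⟩
  | n + 1 => eulerPartial n * ⟨1 :: (List.replicate n 0 ++ [-1])⟩

lemma hasExpansion_prod_one_sub_pow {N : ℕ} (n : ℕ) :
    HasExpansion (fun q ↦ ∏ i ∈ Finset.range n, (1 - q ^ (i + 1)))
      (eulerPartial n : TruncSeries N) := by
  induction n with
  | zero => exact .of_listEval fun q ↦ by simp [listEval]
  | succ n ih =>
    have hfactor : HasExpansion (fun q ↦ 1 - q ^ (n + 1))
        (⟨1 :: (List.replicate n 0 ++ [-1])⟩ : TruncSeries N) := by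
      refine .of_listEval fun q ↦ ?_
      simp only [listEval, listEval_append, listEval_eq_zero q (a := List.replicate n 0) (by simp),
        List.length_replicate]
      push_cast
      ring
    exact (ih.mul hfactor).congr (.of_forall fun q ↦ Finset.prod_range_succ _ n)

lemma summable_norm_neg_pow_add {q : ℂ} (hq : ‖q‖ < 1) (n : ℕ) :
    Summable fun i : ℕ ↦ ‖-q ^ (i + n + 1)‖ := by
  simp only [norm_neg, norm_pow, add_assoc]
  exact (summable_nat_add_iff (n + 1)).2 (summable_geometric_of_lt_one (norm_nonneg q) hq)

lemma norm_tprod_one_sub_pow_sub_one_le {q : ℂ} (hq : ‖q‖ ≤ 1 / 2) (n : ℕ) :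
    ‖∏' i : ℕ, (1 - q ^ (i + n + 1)) - 1‖ ≤ 4 * ‖q‖ ^ (n + 1) := by
  have hq₁ : ‖q‖ < 1 := hq.trans_lt one_half_lt_one
  have hsum := summable_norm_neg_pow_add hq₁ n
  have htsum : ∑' i : ℕ, ‖-q ^ (i + n + 1)‖ ≤ 2 * ‖q‖ ^ (n + 1) := by
    simp only [norm_neg, norm_pow, add_assoc, pow_add ‖q‖ _ (n + 1)]
    rw [tsum_mul_right, tsum_geometric_of_lt_one (norm_nonneg q) hq₁]
    gcongr
    exact inv_le_of_inv_le₀ two_pos (by linarith)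
  have hexp : ‖∏' i : ℕ, (1 + -q ^ (i + n + 1)) - 1‖ ≤ Real.exp (2 * ‖q‖ ^ (n + 1)) - 1 := by
    refine le_of_tendsto ((multipliable_one_add_of_summable hsum).hasProd.sub_const 1).norm
      (.of_forall fun s ↦ (s.norm_prod_one_add_sub_one_le _).trans ?_)
    gcongr
    exact (hsum.sum_le_tsum s fun _ _ ↦ norm_nonneg _).trans htsum
  have hsmall : |2 * ‖q‖ ^ (n + 1)| ≤ 1 := by
    rw [abs_of_nonneg (by positivity)]
    linarith [pow_le_of_le_one (norm_nonneg q) hq₁.le n.add_one_ne_zero]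
  have hlin := (le_abs_self _).trans (Real.abs_exp_sub_one_le hsmall)
  rw [abs_of_nonneg (a := 2 * ‖q‖ ^ (n + 1)) (by positivity)] at hlin
  simp only [← sub_eq_add_neg] at hexp
  linarith

lemma eventually_norm_lt {r : ℝ} (hr : 0 < r) : ∀ᶠ q : ℂ in 𝓝 0, ‖q‖ < r := by
  simpa using eventually_norm_sub_lt (0 : ℂ) hr

lemma eulerProduct_sub_prod_isBigO (n : ℕ) :
    (eulerProduct - fun q ↦ ∏ i ∈ Finset.range n, (1 - q ^ (i + 1))) =O[𝓝 0]
      fun q ↦ q ^ (n + 1) := by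
  have hprod : (fun q : ℂ ↦ ∏ i ∈ Finset.range n, (1 - q ^ (i + 1))) =O[𝓝 0]
      fun _ ↦ (1 : ℂ) :=
    (show Continuous _ by fun_prop).continuousAt.tendsto.isBigO_one ℂ
  have htail : (fun q : ℂ ↦ ∏' i : ℕ, (1 - q ^ (i + n + 1)) - 1) =O[𝓝 0]
      fun q ↦ q ^ (n + 1) := by
    refine .of_bound 4 ?_
    filter_upwards [eventually_norm_lt one_half_pos] with q hq
    simpa using norm_tprod_one_sub_pow_sub_one_le hq.le n
  have hsplit : (fun q : ℂ ↦ (∏ i ∈ Finset.range n, (1 - q ^ (i + 1))) *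
      (∏' i : ℕ, (1 - q ^ (i + n + 1)) - 1)) =ᶠ[𝓝 0]
      eulerProduct - fun q ↦ ∏ i ∈ Finset.range n, (1 - q ^ (i + 1)) := by
    filter_upwards [eventually_norm_lt one_pos] with q hq
    have hmul : Multipliable fun i : ℕ ↦ 1 - q ^ (i + n + 1) := by
      simpa only [sub_eq_add_neg] using
        multipliable_one_add_of_summable (summable_norm_neg_pow_add hq n)
    rw [Pi.sub_apply, eulerProduct, mul_sub_one,
      Multipliable.prod_mul_tprod_nat_mul' (f := fun i : ℕ ↦ 1 - q ^ (i + 1)) hmul]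
  simpa only [one_mul] using (hprod.mul htail).congr' hsplit .rfl

lemma analyticAt_eulerProduct : AnalyticAt ℂ eulerProduct 0 :=
  ModularForm.differentiableOn_tprod_one_sub_pow.analyticAt (Metric.ball_mem_nhds _ one_pos)

lemma hasExpansion_eulerProduct (n : ℕ) :
    HasExpansion eulerProduct (eulerPartial n : TruncSeries (n + 1)) :=
  (hasExpansion_prod_one_sub_pow n).of_isBigO
    (analyticAt_eulerProduct.sub (by fun_prop)) (eulerProduct_sub_prod_isBigO n)

/-- The `q`-expansion of `f11` modulo `q ^ (n + 1)`. -/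
def f11Series (n : ℕ) : TruncSeries (n + 1) :=
  ⟨[0, 1]⟩ * ((eulerPartial n * eulerPartial n) *
    ((eulerPartial n).expand 10 * (eulerPartial n).expand 10))

lemma hasExpansion_f11OfQ (n : ℕ) : HasExpansion f11OfQ (f11Series n) := by
  have hP := hasExpansion_eulerProduct n
  have hq : HasExpansion id (⟨[0, 1]⟩ : TruncSeries (n + 1)) :=
    .of_listEval fun q ↦ by simp [listEval]
  refine (hq.mul ((hP.mul hP).mul ((hP.comp_pow 10).mul (hP.comp_pow 10)))).congr ?_
  filter_upwards [eventually_norm_lt one_pos] with q hq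
  simp only [f11OfQ_eq hq, Pi.mul_apply, id, sq]

section Relation

variable {R : Type*} [Add R] [Mul R] [SMul ℤ R]

/-- The numerator of `I2` in terms of a function and its first two derivatives. -/
def I2Numerator (g g₁ g₂ : R) : R := (2 : ℤ) • (g * g₂) + (-3 : ℤ) • (g₁ * g₁)

/-- The numerator of `J2` in terms of a function and its first three derivatives. -/
def J2Numerator (g g₁ g₂ g₃ : R) : R :=
  (4 : ℤ) • (g * g * g₃) + (-24 : ℤ) • (g * g₁ * g₂) + (24 : ℤ) • (g₁ * g₁ * g₁)

/-- The polynomial relating `I2 f11` and `J2 f11`, made homogeneous with `i`, `j`, `z` of degree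
`2`, `3`, `2`. -/
def relationPoly (i j z : R) : R :=
  j * j * (j * j) +
  (32 : ℤ) • ((i + (-8 : ℤ) • z) *
    (i * i + (72 : ℤ) • (i * z) + (-944 : ℤ) • (z * z)) * (j * j)) +
  (256 : ℤ) • ((i + (8 : ℤ) • z) *
    (i * i * i + (152 : ℤ) • (i * i * z) + (-704 : ℤ) • (i * (z * z)) +
      (1168 : ℤ) • (z * (z * z))) * ((i + (-8 : ℤ) • z) * (i + (-8 : ℤ) • z)))

/-- `relationPoly` at the numerators of `I2` and `J2` and the denominator of `I2`; for the
operator `θ` on functions of `q` and on their truncated expansions alike. -/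
def relationNumerator (θ : R → R) (g : R) : R :=
  relationPoly (I2Numerator g (θ g) (θ (θ g))) (J2Numerator g (θ g) (θ (θ g)) (θ (θ (θ g))))
    (g * g * (g * g))

end Relation

lemma hasExpansion_relationNumerator {N : ℕ} {g : ℂ → ℂ} {a : TruncSeries N}
    (h : HasExpansion g a) :
    HasExpansion (relationNumerator thetaOp g) (relationNumerator TruncSeries.theta a) := by
  have h₁ := h.theta
  have h₂ := h₁.theta
  have hi := ((h.mul h₂).smul 2).add ((h₁.mul h₁).smul (-3))
  have hj := ((((h.mul h).mul h₂.theta).smul 4).add (((h.mul h₁).mul h₂).smul (-24))).add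
    (((h₁.mul h₁).mul h₁).smul 24)
  have hz := (h.mul h).mul (h.mul h)
  have hd := hi.add (hz.smul (-8))
  have hquad := ((hi.mul hi).add ((hi.mul hz).smul 72)).add ((hz.mul hz).smul (-944))
  have hcubic := ((((hi.mul hi).mul hi).add (((hi.mul hi).mul hz).smul 152)).add
    ((hi.mul (hz.mul hz)).smul (-704))).add ((hz.mul (hz.mul hz)).smul 1168)
  exact (((hj.mul hj).mul (hj.mul hj)).add (((hd.mul hquad).mul (hj.mul hj)).smul 32)).add
    ((((hi.add (hz.smul 8)).mul hcubic).mul (hd.mul hd)).smul 256)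

/-- The relation has denominator `f11 ^ 24`, of order `24` at `q = 0`, so `25` vanishing
coefficients make it vanish at `∞`. -/
lemma coeffs_relationNumerator_f11Series :
    ∀ c ∈ (relationNumerator TruncSeries.theta (f11Series 24)).coeffs, c = 0 := by
  decide +kernel

lemma exists_relationNumerator_f11OfQ_eq :
    ∃ h : ℂ → ℂ, AnalyticAt ℂ h 0 ∧
      ∀ᶠ q in 𝓝 0, relationNumerator thetaOp f11OfQ q = q ^ 25 * h q := by
  obtain ⟨h, hh, heq⟩ := hasExpansion_relationNumerator (hasExpansion_f11OfQ 24)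
  refine ⟨h, hh, heq.mono fun q hq ↦ ?_⟩
  rw [hq, listEval_eq_zero q coeffs_relationNumerator_f11Series, zero_add]

end NewformExpansion

section Vanishing

lemma hasDerivAt_qq (τ : ℂ) : HasDerivAt qq (qq τ * (2 * Real.pi * I)) τ := by
  have hlin : HasDerivAt (fun w : ℂ ↦ 2 * Real.pi * I * w) (2 * Real.pi * I) τ := by
    simpa using (hasDerivAt_id τ).const_mul (2 * Real.pi * I)
  exact hlin.cexp

lemma differentiableOn_thetaOp {G : ℂ → ℂ} (hG : DifferentiableOn ℂ G (Metric.ball 0 1)) :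
    DifferentiableOn ℂ (thetaOp G) (Metric.ball 0 1) :=
  differentiableOn_id.mul (hG.deriv Metric.isOpen_ball)

lemma eqOn_nderiv_comp_qq {F G : ℂ → ℂ} (hG : DifferentiableOn ℂ G (Metric.ball 0 1))
    (hFG : upperHalfPlaneSet.EqOn F (G ∘ qq)) :
    upperHalfPlaneSet.EqOn (nderiv F) (thetaOp G ∘ qq) := by
  intro τ hτ
  have hq : qq τ ∈ Metric.ball 0 1 := mem_ball_zero_iff.2 (norm_qq_lt_one hτ)
  have hcomp := (hG.hasDerivAt (Metric.isOpen_ball.mem_nhds hq)).comp τ (hasDerivAt_qq τ)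
  rw [nderiv, (hFG.eventuallyEq_of_mem (isOpen_upperHalfPlaneSet.mem_nhds hτ)).deriv_eq,
    hcomp.deriv, Function.comp_apply, thetaOp]
  have := two_pi_I_ne_zero
  field_simp

lemma relationPoly_div (i j : ℂ) {φ : ℂ} (hφ : φ ≠ 0) :
    relationPoly (i / φ ^ 4) (j / φ ^ 6) 1 = relationPoly i j (φ ^ 4) / φ ^ 24 := by
  simp only [relationPoly, zsmul_eq_mul]
  field_simp

lemma relationNumerator_thetaOp_apply (G : ℂ → ℂ) (q : ℂ) :
    relationNumerator thetaOp G q =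
      relationPoly (I2Numerator (G q) (thetaOp G q) (thetaOp (thetaOp G) q))
        (J2Numerator (G q) (thetaOp G q) (thetaOp (thetaOp G) q) (thetaOp (thetaOp (thetaOp G)) q))
        (G q * G q * (G q * G q)) := rfl

lemma relationPoly_I2_J2_comp_qq {G : ℂ → ℂ} (hG : DifferentiableOn ℂ G (Metric.ball 0 1)) {τ : ℂ}
    (hτ : τ ∈ upperHalfPlaneSet) (hG₀ : G (qq τ) ≠ 0) :
    relationPoly (I2 (G ∘ qq) τ) (J2 (G ∘ qq) τ) 1 =
      relationNumerator thetaOp G (qq τ) / G (qq τ) ^ 24 := by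
  have hG₁ := differentiableOn_thetaOp hG
  have h₁ := eqOn_nderiv_comp_qq hG fun _ _ ↦ rfl
  have h₂ := eqOn_nderiv_comp_qq hG₁ h₁
  have h₃ := eqOn_nderiv_comp_qq (differentiableOn_thetaOp hG₁) h₂
  rw [I2, J2, h₁ hτ, h₂ hτ, h₃ hτ]
  simp only [Function.comp_apply]
  rw [relationPoly_div _ _ hG₀]
  rw [relationNumerator_thetaOp_apply]
  congr 2
  · simp only [I2Numerator, zsmul_eq_mul]
    push_cast
    ring
  · simp only [J2Numerator, zsmul_eq_mul]
    push_cast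
    ring
  · ring

lemma differentiableOn_f11OfQ : DifferentiableOn ℂ f11OfQ (Metric.ball 0 1) := by
  have hP : DifferentiableOn ℂ eulerProduct (Metric.ball 0 1) :=
    ModularForm.differentiableOn_tprod_one_sub_pow
  have hP₁₁ : DifferentiableOn ℂ (fun q ↦ eulerProduct (q ^ 11)) (Metric.ball 0 1) := by
    refine hP.comp (by fun_prop : DifferentiableOn ℂ (fun q : ℂ ↦ q ^ 11) _) fun q hq ↦ ?_
    rw [mem_ball_zero_iff] at hq ⊢
    simpa using pow_lt_one₀ (norm_nonneg q) hq (by norm_num)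
  exact (differentiableOn_id.mul ((hP.pow 2).mul (hP₁₁.pow 2))).congr fun q hq ↦
    f11OfQ_eq (mem_ball_zero_iff.1 hq)

/-- The left-hand side of the relation between `I2 f11` and `J2 f11` as a function on `ℍ`. -/
def f11Relation (z : ℍ) : ℂ := relationPoly (I2 f11 z) (J2 f11 z) 1

lemma isZeroAtImInfty_f11Relation : IsZeroAtImInfty f11Relation := by
  obtain ⟨h, hh, hnum⟩ := exists_relationNumerator_f11OfQ_eq
  have hqq : Tendsto (fun z : ℍ ↦ qq z) atImInfty (𝓝 0) := by
    simpa [Function.Periodic.qParam, qq] using qParam_tendsto_atImInfty one_pos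
  have hP := analyticAt_eulerProduct.continuousAt
  have hP₁₁ : ContinuousAt (fun q ↦ eulerProduct (q ^ 11)) 0 :=
    ContinuousAt.comp_of_eq hP (by fun_prop) (by simp)
  have hlim : Tendsto (fun q ↦ q * h q / (eulerProduct q ^ 2 * eulerProduct (q ^ 11) ^ 2) ^ 24)
      (𝓝 0) (𝓝 0) := by
    have hcont : ContinuousAt
        (fun q ↦ q * h q / (eulerProduct q ^ 2 * eulerProduct (q ^ 11) ^ 2) ^ 24) 0 :=
      (continuousAt_id.mul hh.continuousAt).div (((hP.pow 2).mul (hP₁₁.pow 2)).pow 24)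
        (by simp [eulerProduct])
    simpa using hcont.tendsto
  refine (hlim.comp hqq).congr' ?_
  filter_upwards [hqq.eventually hnum] with z hz
  have hq₀ : qq z ≠ 0 := Complex.exp_ne_zero _
  rw [f11Relation, f11_eq_comp_qq, relationPoly_I2_J2_comp_qq differentiableOn_f11OfQ z.im_pos
    (f11_ne_zero z.im_pos), hz, f11OfQ_eq (norm_qq_lt_one z.im_pos), mul_pow, pow_succ _ 24,
    mul_assoc, mul_div_mul_left _ _ (pow_ne_zero _ hq₀), Function.comp_apply]

lemma relationPoly_eq_of_sq_eq {i j j' : ℂ} (z : ℂ) (hj : j ^ 2 = j' ^ 2) :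
    relationPoly i j z = relationPoly i j' z := by
  rw [sq, sq] at hj
  rw [relationPoly, hj, relationPoly]

lemma f11Relation_smul_of_weight_two {g : GL (Fin 2) ℝ} {μ : ℂ} (hg : 0 < g.val.det)
    (hfg : ∀ z : ℍ, f11 ↑(g • z) = μ * (denom g z ^ 2 * f11 z)) (hμ : (μ * g.val.det) ^ 2 = 1)
    (z : ℍ) : f11Relation (g • z) = f11Relation z := by
  rw [f11Relation, I2_smul_of_weight_two hg differentiableOn_f11 hfg hμ,
    relationPoly_eq_of_sq_eq 1 (J2_sq_smul_of_weight_two hg differentiableOn_f11 hfg hμ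
      (fun _ ↦ f11_ne_zero) z), f11Relation]

lemma f11Relation_smul {γ : SL(2, ℤ)} (hγ : γ ∈ CongruenceSubgroup.Gamma0 11) (z : ℍ) :
    f11Relation (γ • z) = f11Relation z := by
  have hdet : (γ : GL (Fin 2) ℝ).val.det = 1 :=
    congrArg Units.val (Matrix.SpecialLinearGroup.det_mapGL γ)
  exact f11Relation_smul_of_weight_two (g := γ) (μ := 1) (by rw [hdet]; exact one_pos)
    (fun z ↦ by rw [one_mul, ← f11_smul hγ, ModularGroup.sl_moeb]) (by rw [hdet]; simp) z

lemma f11Relation_fricke_smul (z : ℍ) : f11Relation (fricke • z) = f11Relation z :=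
  f11Relation_smul_of_weight_two (by simp [det_fricke]) f11_fricke_smul (by simp [det_fricke]) z

lemma exists_mem_Gamma0_mul_S_mul_T_zpow {p : ℕ} [Fact p.Prime] {γ : SL(2, ℤ)}
    (hγ : γ ∉ CongruenceSubgroup.Gamma0 p) :
    ∃ γ' ∈ CongruenceSubgroup.Gamma0 p, ∃ j : ℤ,
      γ = γ' * (ModularGroup.S * ModularGroup.T ^ j) := by
  rw [CongruenceSubgroup.Gamma0_mem] at hγ
  obtain ⟨j, hj⟩ := ZMod.intCast_surjective ((γ 1 1 : ℤ) / (γ 1 0 : ℤ) : ZMod p)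
  refine ⟨γ * (ModularGroup.S * ModularGroup.T ^ j)⁻¹, ?_, j, (inv_mul_cancel_right _ _).symm⟩
  have hentry : (γ * (ModularGroup.S * ModularGroup.T ^ j)⁻¹) 1 0 = j * γ 1 0 - γ 1 1 := by
    simp [Matrix.adjugate_fin_two, ModularGroup.coe_S, ModularGroup.coe_T_zpow, Matrix.mul_apply,
      Fin.sum_univ_two, sub_eq_add_neg, mul_comm]
  rw [CongruenceSubgroup.Gamma0_mem, hentry]
  push_cast
  rw [hj, div_mul_cancel₀ _ hγ, sub_self]

/-- The matrix `!![1, j; 0, 11]`. Composed with the Fricke involution it gives `S * T ^ j`, so it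
carries the cusp `0` of `Γ₀(11)` back to `∞`. -/
def upperEleven (j : ℤ) : GL (Fin 2) ℝ := .mkOfDetNeZero !![1, j; 0, 11] (by simp)

lemma coe_upperEleven_smul (j : ℤ) (z : ℍ) : (↑(upperEleven j • z) : ℂ) = (z + j) / 11 := by
  rw [coe_smul_of_det_pos (by simp [upperEleven, Matrix.GeneralLinearGroup.mkOfDetNeZero])]
  simp [num, denom, upperEleven, Matrix.GeneralLinearGroup.mkOfDetNeZero]

lemma fricke_smul_upperEleven_smul (j : ℤ) (z : ℍ) :
    fricke • upperEleven j • z = (ModularGroup.S * ModularGroup.T ^ j) • z := by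
  apply UpperHalfPlane.ext
  rw [coe_fricke_smul, coe_upperEleven_smul, mul_smul, modular_S_smul]
  change _ = (-(↑(ModularGroup.T ^ j • z) : ℂ))⁻¹
  rw [ModularGroup.coe_T_zpow_smul_eq, mul_div_cancel₀ _ (by norm_num), inv_neg, neg_div, one_div]

lemma isZeroAtImInfty_f11Relation_smul (γ : SL(2, ℤ)) :
    IsZeroAtImInfty fun z ↦ f11Relation (γ • z) := by
  by_cases hγ : γ ∈ CongruenceSubgroup.Gamma0 11
  · simpa only [f11Relation_smul hγ] using isZeroAtImInfty_f11Relation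
  · have : Fact (Nat.Prime 11) := ⟨by norm_num⟩
    obtain ⟨γ', hγ', j, rfl⟩ := exists_mem_Gamma0_mul_S_mul_T_zpow hγ
    have hrel (z : ℍ) : f11Relation ((γ' * (ModularGroup.S * ModularGroup.T ^ j)) • z) =
        f11Relation (upperEleven j • z) := by
      rw [mul_smul, f11Relation_smul hγ', ← fricke_smul_upperEleven_smul, f11Relation_fricke_smul]
    simp only [hrel]
    exact isZeroAtImInfty_f11Relation.comp (tendsto_smul_atImInfty (by
      simp [upperEleven, Matrix.GeneralLinearGroup.mkOfDetNeZero]))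

lemma differentiableOn_relationPoly_I2_J2 {f : ℂ → ℂ}
    (hf : DifferentiableOn ℂ f upperHalfPlaneSet) (hf₀ : ∀ z ∈ upperHalfPlaneSet, f z ≠ 0) :
    DifferentiableOn ℂ (fun τ ↦ relationPoly (I2 f τ) (J2 f τ) 1) upperHalfPlaneSet := by
  have hI := differentiableOn_I2 hf hf₀
  have hJ := differentiableOn_J2 hf hf₀
  unfold relationPoly
  fun_prop

/-- `f11Relation` as a modular form of weight `0` for `Γ₀(11)`. -/
def f11RelationForm :
    ModularForm ((CongruenceSubgroup.Gamma0 11).map (Matrix.SpecialLinearGroup.mapGL ℝ)) 0 where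
  toFun := f11Relation
  slash_action_eq' g hg := by
    obtain ⟨γ, hγ, rfl⟩ := hg
    ext z
    change (f11Relation ∣[(0 : ℤ)] γ) z = f11Relation z
    rw [ModularForm.SL_slash_apply, f11Relation_smul hγ, neg_zero, zpow_zero, mul_one]
  holo' := by
    refine UpperHalfPlane.mdifferentiable_iff.2 ?_
    refine (differentiableOn_relationPoly_I2_J2 differentiableOn_f11
      fun _ ↦ f11_ne_zero).congr fun τ hτ ↦ ?_
    change f11Relation (ofComplex τ) = _
    rw [f11Relation, ofComplex_apply_of_im_pos hτ]
  bdd_at_cusps' {c} hc := by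
    rw [Subgroup.IsArithmetic.isCusp_iff_isCusp_SL2Z] at hc
    rw [OnePoint.isBoundedAt_iff_forall_SL2Z hc]
    intro γ _
    have hslash : f11Relation ∣[(0 : ℤ)] γ = fun z ↦ f11Relation (γ • z) := by
      ext z
      rw [ModularForm.SL_slash_apply, neg_zero, zpow_zero, mul_one]
    rw [hslash]
    exact (isZeroAtImInfty_f11Relation_smul γ).isBoundedAtImInfty

lemma f11Relation_eq_zero (z : ℍ) : f11Relation z = 0 := by
  obtain ⟨c, hc⟩ := ModularForm.eq_const_of_weight_zero f11RelationForm
  have hconst (w : ℍ) : f11Relation w = c := congrFun hc w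
  rw [hconst]
  refine tendsto_nhds_unique tendsto_const_nhds (isZeroAtImInfty_f11Relation.congr hconst)

end Vanishing

/-- The newform of weight two on `Γ₀(11)` satisfies an algebraic relation between
its differential invariants `I₂` and `J₂`. -/
theorem newform11_invariant_relation :
    ∀ τ : ℂ, 0 < τ.im →
      J2 f11 τ ^ 4 +
      32 * (I2 f11 τ - 8) * (I2 f11 τ ^ 2 + 72 * I2 f11 τ - 944) * J2 f11 τ ^ 2 +
      256 * (I2 f11 τ + 8) *
        (I2 f11 τ ^ 3 + 152 * I2 f11 τ ^ 2 - 704 * I2 f11 τ + 1168) *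
        (I2 f11 τ - 8) ^ 2 = 0 := by
  intro τ hτ
  have h : relationPoly (I2 f11 τ) (J2 f11 τ) 1 = 0 := f11Relation_eq_zero ⟨τ, hτ⟩
  simp only [relationPoly, zsmul_eq_mul] at h
  push_cast at h
  linear_combination h
end
end

section
/- The unique weight-two newform on Γ₀(14), f(τ) = q ∏_{n≥1}(1−qⁿ)(1−q²ⁿ)(1−q⁷ⁿ)(1−q¹⁴ⁿ), satisfies the algebraic relation between its differential invariants: for every τ ∈ ℍ, J₂⁴ + 32(I₂ − 5)(I₂² + 49I₂ − 350)J₂² + 256(I₂ + 20)(I₂ − 4)(I₂² + 86I₂ − 199)(I₂ − 5)² = 0, where I₂ = (2ff'' − 3(f')²)/f⁴ and J₂ = (4f²f''' − 24ff'f'' + 24(f')³)/f⁶. -/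
open Complex

noncomputable section

/-- The unique weight-two newform on `Γ₀(14)`,
`f(τ) = q ∏_{n≥1} (1−qⁿ)(1−q²ⁿ)(1−q⁷ⁿ)(1−q¹⁴ⁿ)`. -/
def f14 : ℂ → ℂ := fun τ =>
  qq τ * ∏' n : ℕ, ((1 - qq τ ^ (n + 1)) * (1 - qq τ ^ (2 * (n + 1))) *
    (1 - qq τ ^ (7 * (n + 1))) * (1 - qq τ ^ (14 * (n + 1))))

/-!
The differential `f dτ` descends to an invariant differential on the elliptic curve `X₀(14) / W₂`.
A weight-two Eisenstein series divided by `f` gives a function `x` of degree two on it, and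
`y = x' / f` satisfies `9 y² = (x - 1)(x + 11)(x² - 32 x - 32)`. The logarithmic derivative `φ` of
`f` is a combination of dilates of `E₂`, so `f² I₂ = 2 φ' - φ²` is a modular form of weight four and
`I₂` turns out to be a quadratic polynomial in `x`. Since `J₂ = 2 I₂' / f`, this makes `J₂` a
polynomial in `x` times `y`, and eliminating `x` and `y` yields the relation.

All identities involve only Eisenstein series and their derivatives; each reduces to finitely many
`q`-coefficients because a form of level one, such as the norm of a form on `Γ`, vanishes when its
order at the cusp exceeds a twelfth of its weight. The form `f²` itself enters as the solution of
`P' = 2 φ P`, which determines it up to a constant.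
-/

section
open UpperHalfPlane hiding I
open Derivative Filter Asymptotics EisensteinSeries Matrix.SpecialLinearGroup CongruenceSubgroup
open Function.Periodic (qParam)
open scoped Manifold MatrixGroups ModularForm Topology

namespace Newform14

section ModularForms

lemma isBoundedAtImInfty_normalizedDeriv {F : ℍ → ℂ} (hF : MDiff F) (h : IsBoundedAtImInfty F) :
    IsBoundedAtImInfty (D F) := by
  rw [isBoundedAtImInfty_iff] at h ⊢
  obtain ⟨M, A, hM⟩ := h
  refine ⟨‖(2 * Real.pi * I : ℂ)⁻¹‖ * (M / (1 / 2)), max A 0 + 1, fun τ hτ => ?_⟩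
  have him {z : ℂ} (hz : z ∈ Metric.closedBall (τ : ℂ) (1 / 2)) : max A 0 < z.im := by
    have h1 := (Complex.abs_im_le_norm _).trans (mem_closedBall_iff_norm.mp hz)
    rw [Complex.sub_im, coe_im] at h1
    linarith [(abs_le.mp h1).1]
  have hdiff : DiffContOnCl ℂ (F ∘ ofComplex) (Metric.ball (τ : ℂ) (1 / 2)) :=
    ((UpperHalfPlane.mdifferentiable_iff.mp hF).mono fun z hz =>
      (le_max_right A 0).trans_lt (him (Metric.closure_ball_subset_closedBall hz))).diffContOnCl
  rw [normalizedDerivOfComplex, norm_mul]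
  gcongr
  refine Complex.norm_deriv_le_of_forall_mem_sphere_norm_le (by norm_num) hdiff fun z hz => ?_
  have hz' := him (Metric.sphere_subset_closedBall hz)
  have hpos : 0 < z.im := (le_max_right A 0).trans_lt hz'
  rw [Function.comp_apply, ofComplex_apply_of_im_pos hpos]
  exact hM ⟨z, hpos⟩ ((le_max_left A 0).trans hz'.le)

/-- Modular forms of weight `k` for a subgroup `Γ` of `SL(2, ℤ)`, as a predicate on functions:
the bundled `ModularForm Γ k` is not closed under the Serre derivative in Mathlib. Boundedness at
every cusp is expressed through the slash translates by all of `SL(2, ℤ)`. -/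
structure IsModularForm (Γ : Subgroup SL(2, ℤ)) (k : ℤ) (F : ℍ → ℂ) : Prop where
  mdiff : MDiff F
  slash_eq : ∀ γ ∈ Γ, F ∣[k] γ = F
  bdd : ∀ γ : SL(2, ℤ), IsBoundedAtImInfty (F ∣[k] γ)

lemma mdiff_slash {F : ℍ → ℂ} (hF : MDiff F) (k : ℤ) (γ : SL(2, ℤ)) : MDiff (F ∣[k] γ) := by
  rw [ModularForm.SL_slash]
  exact hF.slash k _

namespace IsModularForm

variable {Γ : Subgroup SL(2, ℤ)} {k l : ℤ} {F G : ℍ → ℂ}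

lemma add (hF : IsModularForm Γ k F) (hG : IsModularForm Γ k G) : IsModularForm Γ k (F + G) where
  mdiff := hF.mdiff.add hG.mdiff
  slash_eq γ hγ := by rw [SlashAction.add_slash, hF.slash_eq γ hγ, hG.slash_eq γ hγ]
  bdd γ := by rw [SlashAction.add_slash]; exact (hF.bdd γ).add (hG.bdd γ)

lemma smul {α : Type*} [SMul α ℂ] [IsScalarTower α ℂ ℂ] (c : α) (hF : IsModularForm Γ k F) :
    IsModularForm Γ k (c • F) := by
  rw [← smul_one_smul ℂ c F]
  exact
    { mdiff := hF.mdiff.const_smul _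
      slash_eq γ hγ := by rw [ModularForm.SL_smul_slash, hF.slash_eq γ hγ]
      bdd γ := by rw [ModularForm.SL_smul_slash]; exact (hF.bdd γ).const_smul_left _ }

lemma sub (hF : IsModularForm Γ k F) (hG : IsModularForm Γ k G) : IsModularForm Γ k (F - G) := by
  simpa [sub_eq_add_neg] using hF.add (hG.smul (-1 : ℂ))

lemma mul (hF : IsModularForm Γ k F) (hG : IsModularForm Γ l G) :
    IsModularForm Γ (k + l) (F * G) where
  mdiff := hF.mdiff.mul hG.mdiff
  slash_eq γ hγ := by rw [ModularForm.mul_slash_SL2, hF.slash_eq γ hγ, hG.slash_eq γ hγ]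
  bdd γ := by rw [ModularForm.mul_slash_SL2]; exact (hF.bdd γ).mul (hG.bdd γ)

lemma serreDerivative (hF : IsModularForm Γ k F) :
    IsModularForm Γ (k + 2) (serreDerivative k F) where
  mdiff := serreDerivative_mdifferentiable _ hF.mdiff
  slash_eq γ hγ := serreDerivative_slash_invariant hF.mdiff (hF.slash_eq γ hγ)
  bdd γ := by
    rw [serreDerivative_slash_equivariant hF.mdiff, serreDerivative_eq]
    have hD := isBoundedAtImInfty_normalizedDeriv (mdiff_slash hF.mdiff k γ) (hF.bdd γ)
    have hE := (isBoundedAtImInfty_E2.mul (hF.bdd γ)).const_smul_left ((k : ℂ) * 12⁻¹)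
    refine (hD.sub hE).congr_left fun z => ?_
    simp only [Pi.smul_apply, Pi.mul_apply, smul_eq_mul, mul_assoc]

end IsModularForm

end ModularForms

section EisensteinE2

/-- The logarithmic derivative `(2πi)⁻¹ c / (cτ + d)` of the automorphy factor of `γ`, which
measures the failure of `E2` to be modular. -/
def slashDefect (γ : SL(2, ℤ)) (τ : ℍ) : ℂ :=
  (2 * Real.pi * I)⁻¹ * ((γ 1 0 : ℤ) / denom γ τ)

lemma slashDefect_eq_smul_slash (γ : SL(2, ℤ)) :
    slashDefect γ = ((2 * Real.pi * I)⁻¹ * (γ 1 0 : ℤ) : ℂ) • ((1 : ℍ → ℂ) ∣[(1 : ℤ)] γ) := by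
  ext τ
  simp [slashDefect, ModularForm.SL_slash_apply, div_eq_mul_inv, mul_assoc]

lemma mdiff_slashDefect (γ : SL(2, ℤ)) : MDiff (slashDefect γ) := by
  rw [slashDefect_eq_smul_slash]
  exact (mdiff_slash mdifferentiable_const 1 γ).const_smul _

lemma normalizedDeriv_slashDefect (γ : SL(2, ℤ)) : D (slashDefect γ) = -slashDefect γ ^ 2 := by
  have hone : MDiff (1 : ℍ → ℂ) := mdifferentiable_const
  have hD1 : D (1 : ℍ → ℂ) = 0 := normalizedDerivOfComplex_const 1
  rw [slashDefect_eq_smul_slash, normalizedDerivOfComplex_smul _ _ (mdiff_slash hone 1 γ),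
    normalizedDerivOfComplex_SL_slash hone, hD1]
  ext τ
  simp [ModularForm.SL_slash_apply]
  ring

lemma E2_slash_eq_add_slashDefect (γ : SL(2, ℤ)) :
    E2 ∣[(2 : ℤ)] γ = E2 + (12 : ℂ) • slashDefect γ := by
  rw [E2_slash_action]
  ext τ
  have hπ : (Real.pi : ℂ) ≠ 0 := mod_cast Real.pi_ne_zero
  have hI := I_ne_zero
  have hdenom := denom_ne_zero γ τ
  simp only [Pi.add_apply, Pi.sub_apply, Pi.smul_apply, smul_eq_mul, D2, slashDefect,
    riemannZeta_two]
  field_simp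
  linear_combination (-12 * (γ 1 0 : ℤ) : ℂ) * I_sq

lemma isBoundedAtImInfty_slashDefect (γ : SL(2, ℤ)) : IsBoundedAtImInfty (slashDefect γ) := by
  refine isBoundedAtImInfty_iff.mpr ⟨‖(2 * Real.pi * I : ℂ)⁻¹‖ * 1, 1, fun τ hτ => ?_⟩
  rw [slashDefect, norm_mul]
  gcongr
  rw [norm_div, div_le_one (norm_pos_iff.mpr (denom_ne_zero γ τ))]
  calc ‖((γ 1 0 : ℤ) : ℂ)‖ ≤ |((γ 1 0 : ℤ) : ℝ)| * τ.im := by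
        rw [Complex.norm_intCast]
        exact le_mul_of_one_le_right (abs_nonneg _) hτ
    _ = |(denom γ τ).im| := by
        simp [ModularGroup.denom_apply, abs_mul, abs_of_pos τ.im_pos]
    _ ≤ ‖denom γ τ‖ := Complex.abs_im_le_norm _

lemma isBoundedAtImInfty_E2_slash (γ : SL(2, ℤ)) : IsBoundedAtImInfty (E2 ∣[(2 : ℤ)] γ) := by
  rw [E2_slash_eq_add_slashDefect]
  exact isBoundedAtImInfty_E2.add ((isBoundedAtImInfty_slashDefect γ).const_smul_left _)

lemma serreDerivative_E2_eq :
    serreDerivative 1 E2 = D E2 - (12 : ℂ)⁻¹ • (E2 * E2) := by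
  ext τ
  simp [serreDerivative_apply, mul_assoc]

lemma serreDerivative_E2_slash (γ : SL(2, ℤ)) :
    serreDerivative 1 E2 ∣[(4 : ℤ)] γ = serreDerivative 1 E2 := by
  have hD : D E2 ∣[(4 : ℤ)] γ =
      D (E2 ∣[(2 : ℤ)] γ) + (2 : ℂ) • (slashDefect γ * E2 ∣[(2 : ℤ)] γ) := by
    rw [normalizedDerivOfComplex_SL_slash E2_mdifferentiable]
    ext τ
    simp [slashDefect, mul_assoc]
  have hmul : (E2 * E2) ∣[(4 : ℤ)] γ = (E2 ∣[(2 : ℤ)] γ) * (E2 ∣[(2 : ℤ)] γ) :=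
    ModularForm.mul_slash_SL2 2 2 γ E2 E2
  rw [serreDerivative_E2_eq, sub_eq_add_neg, ← _root_.neg_smul, SlashAction.add_slash,
    ModularForm.SL_smul_slash, hD, hmul, E2_slash_eq_add_slashDefect,
    normalizedDerivOfComplex_add _ _ E2_mdifferentiable ((mdiff_slashDefect γ).const_smul _),
    normalizedDerivOfComplex_smul _ _ (mdiff_slashDefect γ), normalizedDeriv_slashDefect]
  ext τ
  simp
  ring

lemma isModularForm_serreDerivative_E2 (Γ : Subgroup SL(2, ℤ)) :
    IsModularForm Γ 4 (serreDerivative 1 E2) where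
  mdiff := serreDerivative_mdifferentiable _ E2_mdifferentiable
  slash_eq γ _ := serreDerivative_E2_slash γ
  bdd γ := by
    rw [serreDerivative_E2_slash, serreDerivative_E2_eq]
    exact (isBoundedAtImInfty_normalizedDeriv E2_mdifferentiable isBoundedAtImInfty_E2).sub
      ((isBoundedAtImInfty_E2.mul isBoundedAtImInfty_E2).const_smul_left _)

lemma isBoundedAtImInfty_slash_rat {k : ℤ} {F : ℍ → ℂ}
    (hF : ∀ γ : SL(2, ℤ), IsBoundedAtImInfty (F ∣[k] γ)) (g : GL (Fin 2) ℚ) :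
    IsBoundedAtImInfty (F ∣[k] g.map (Rat.castHom ℝ)) := by
  have hcusp : IsCusp (g.map (Rat.castHom ℝ) • OnePoint.infty) 𝒮ℒ := by
    refine isCusp_SL2Z_iff.mpr ⟨g • OnePoint.infty, ?_⟩
    rw [← Rat.coe_castHom, OnePoint.map_smul, OnePoint.map_infty]
  exact (OnePoint.isBoundedAt_iff_forall_SL2Z hcusp).mpr (fun γ _ => hF γ) _ rfl

/-- The matrix `diag(d, 1)`, acting on `ℍ` by `τ ↦ dτ`. -/
def dilation (d : ℕ) [NeZero d] : GL (Fin 2) ℚ :=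
  Matrix.GeneralLinearGroup.mkOfDetNeZero !![(d : ℚ), 0; 0, 1] (by simp [NeZero.ne d])

/-- The dilation `τ ↦ dτ` of the upper half-plane. -/
def dilate (d : ℕ) [NeZero d] (τ : ℍ) : ℍ := (dilation d).map (Rat.castHom ℝ) • τ

/-- The Eisenstein series `d E₂(dτ) - E₂(τ)` of weight two on `Γ₀(d)`. -/
def eisensteinDiff (d : ℕ) [NeZero d] : ℍ → ℂ :=
  E2 ∣[(2 : ℤ)] (dilation d).map (Rat.castHom ℝ) - E2

section Dilation

variable (d : ℕ) [NeZero d]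

lemma det_dilation : ((dilation d).map (Rat.castHom ℝ)).det.val = d := by
  simp [dilation, Matrix.det_fin_two]

lemma det_dilation_pos : 0 < ((dilation d).map (Rat.castHom ℝ)).det.val := by
  rw [det_dilation]
  exact mod_cast NeZero.pos d

lemma coe_dilate (τ : ℍ) : (dilate d τ : ℂ) = d * τ := by
  rw [dilate, coe_smul_of_det_pos (det_dilation_pos d)]
  simp [num, denom, dilation]

lemma slash_dilation (F : ℍ → ℂ) (τ : ℍ) :
    (F ∣[(2 : ℤ)] (dilation d).map (Rat.castHom ℝ)) τ = d * F (dilate d τ) := by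
  rw [ModularForm.slash_apply, σ, if_pos (det_dilation_pos d), det_dilation]
  simp [denom, dilation, dilate, mul_comm]

lemma isBoundedAtImInfty_eisensteinDiff_slash (γ : SL(2, ℤ)) :
    IsBoundedAtImInfty (eisensteinDiff d ∣[(2 : ℤ)] γ) := by
  have hγ : (mapGL ℝ γ : GL (Fin 2) ℝ) = (mapGL ℚ γ).map (Rat.castHom ℝ) := by
    ext i j
    simp
  have hE : (eisensteinDiff d) ∣[(2 : ℤ)] γ =
      E2 ∣[(2 : ℤ)] (dilation d * mapGL ℚ γ).map (Rat.castHom ℝ) - E2 ∣[(2 : ℤ)] γ := by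
    rw [eisensteinDiff, sub_eq_add_neg, SlashAction.add_slash, SlashAction.neg_slash,
      ← sub_eq_add_neg, map_mul, SlashAction.slash_mul, ← hγ]
    rfl
  rw [hE]
  exact (isBoundedAtImInfty_slash_rat isBoundedAtImInfty_E2_slash _).sub
    (isBoundedAtImInfty_E2_slash γ)

lemma exists_dilation_mul_mapGL {γ : SL(2, ℤ)} (hγ : (d : ℤ) ∣ γ 1 0) :
    ∃ δ : SL(2, ℤ), (dilation d).map (Rat.castHom ℝ) * mapGL ℝ γ =
      mapGL ℝ δ * (dilation d).map (Rat.castHom ℝ) ∧ γ 1 0 = d * δ 1 0 ∧ δ 1 1 = γ 1 1 := by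
  obtain ⟨c, hc⟩ := hγ
  have hdet : γ 0 0 * γ 1 1 - γ 0 1 * γ 1 0 = 1 := by
    rw [← Matrix.det_fin_two, γ.det_coe]
  obtain ⟨δ, hδ⟩ : ∃ δ : SL(2, ℤ), (δ : Matrix (Fin 2) (Fin 2) ℤ) =
      !![γ 0 0, d * γ 0 1; c, γ 1 1] :=
    ⟨⟨_, by rw [Matrix.det_fin_two_of]; linear_combination hdet + γ 0 1 * hc⟩, rfl⟩
  refine ⟨δ, ?_, by simp [hδ, hc], by simp [hδ]⟩
  ext i j
  fin_cases i <;> fin_cases j <;> simp [dilation, Matrix.mul_apply, hδ, hc, mul_comm]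

lemma eisensteinDiff_slash {γ : SL(2, ℤ)} (hγ : (d : ℤ) ∣ γ 1 0) :
    eisensteinDiff d ∣[(2 : ℤ)] γ = eisensteinDiff d := by
  obtain ⟨δ, hδ, h10, h11⟩ := exists_dilation_mul_mapGL d hγ
  have hE : (E2 ∣[(2 : ℤ)] (dilation d).map (Rat.castHom ℝ)) ∣[(2 : ℤ)] γ =
      (E2 ∣[(2 : ℤ)] δ) ∣[(2 : ℤ)] (dilation d).map (Rat.castHom ℝ) := by
    rw [ModularForm.SL_slash, ModularForm.SL_slash, ← SlashAction.slash_mul,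
      ← SlashAction.slash_mul]
    exact congrArg (E2 ∣[(2 : ℤ)] ·) hδ
  have hdefect (τ : ℍ) : d * slashDefect δ (dilate d τ) = slashDefect γ τ := by
    simp only [slashDefect, ModularGroup.denom_apply]
    rw [coe_dilate, h10, h11]
    push_cast
    ring
  rw [eisensteinDiff, sub_eq_add_neg, SlashAction.add_slash, SlashAction.neg_slash, hE,
    E2_slash_eq_add_slashDefect, E2_slash_eq_add_slashDefect]
  ext τ
  simp only [Pi.add_apply, Pi.neg_apply, Pi.smul_apply, smul_eq_mul, slash_dilation, ← hdefect]
  ring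

lemma isModularForm_eisensteinDiff {N : ℕ} (hd : d ∣ N) :
    IsModularForm (Gamma0 N) 2 (eisensteinDiff d) where
  mdiff := (E2_mdifferentiable.slash _ _).sub E2_mdifferentiable
  slash_eq γ hγ := by
    rw [Gamma0_mem, ZMod.intCast_zmod_eq_zero_iff_dvd] at hγ
    exact eisensteinDiff_slash d ((Int.natCast_dvd_natCast.mpr hd).trans hγ)
  bdd γ := isBoundedAtImInfty_eisensteinDiff_slash d γ

end Dilation

end EisensteinE2

section Index

lemma index_Gamma0_le (p : ℕ) [Fact p.Prime] : (Gamma0 p).index ≤ p + 1 := by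
  have hstab : Gamma0 p = (MulAction.stabilizer (GL (Fin 2) (ZMod p))
      (OnePoint.infty : OnePoint (ZMod p))).comap (mapGL (ZMod p)) := by
    ext γ
    simp [OnePoint.smul_infty_eq_self_iff]
  have hindex : (MulAction.stabilizer (GL (Fin 2) (ZMod p))
      (OnePoint.infty : OnePoint (ZMod p))).index ≤ p + 1 := by
    rw [MulAction.index_stabilizer]
    refine (Set.ncard_le_card _).trans_eq ?_
    simp [OnePoint]
  rw [hstab, Subgroup.index_comap]
  rw [← Subgroup.relIndex_top_right] at hindex
  refine (Subgroup.relIndex_le_of_le_right le_top ?_).trans hindex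
  rw [Subgroup.relIndex_top_right]
  exact Subgroup.FiniteIndex.index_ne_zero

lemma Gamma0_mul {m n : ℕ} (h : m.Coprime n) : Gamma0 (m * n) = Gamma0 m ⊓ Gamma0 n := by
  ext γ
  simp only [Subgroup.mem_inf, Gamma0_mem, ZMod.intCast_zmod_eq_zero_iff_dvd, Nat.cast_mul]
  exact ⟨fun hmn => ⟨dvd_of_mul_right_dvd hmn, dvd_of_mul_left_dvd hmn⟩,
    fun ⟨hm, hn⟩ => (Nat.isCoprime_iff_coprime.mpr h).mul_dvd hm hn⟩

lemma index_Gamma0_fourteen_le : (Gamma0 14).index ≤ 24 := by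
  have : Fact (Nat.Prime 7) := ⟨by norm_num⟩
  have hprod : Gamma0 14 = Gamma0 2 ⊓ Gamma0 7 := Gamma0_mul (m := 2) (n := 7) (by norm_num)
  calc (Gamma0 14).index ≤ (Gamma0 2).index * (Gamma0 7).index := hprod ▸ Subgroup.index_inf_le
    _ ≤ (2 + 1) * (7 + 1) := by gcongr <;> exact index_Gamma0_le _
    _ = 24 := by norm_num

end Index

section SturmBound

lemma mdiff_qParam : MDiff fun τ : ℍ => qParam 1 τ :=
  Function.Periodic.differentiable_qParam.mdifferentiable.comp mdifferentiable_coe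

lemma periodic_qParam_comp_ofComplex :
    Function.Periodic ((fun τ : ℍ => qParam 1 τ) ∘ ofComplex) 1 := fun z => by
  have him : (z + 1).im = z.im := by simp
  rcases lt_or_ge 0 z.im with hz | hz
  · rw [Function.comp_apply, Function.comp_apply, ofComplex_apply_of_im_pos hz,
      ofComplex_apply_of_im_pos (him ▸ hz)]
    change qParam 1 (z + 1) = qParam 1 z
    simp only [qParam, ofReal_one, div_one]
    rw [mul_add, mul_one, Complex.exp_periodic]
  · rw [Function.comp_apply, Function.comp_apply, ofComplex_apply_of_im_nonpos hz,
      ofComplex_apply_of_im_nonpos (him.trans_le hz)]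

lemma le_order_qExpansion {𝒢 : Subgroup (GL (Fin 2) ℝ)} {k : ℤ} (f : ModularForm 𝒢 k)
    (h1 : (1 : ℝ) ∈ 𝒢.strictPeriods) {m : ℕ}
    (hO : f =O[atImInfty] fun τ => qParam 1 τ ^ m) : m ≤ (qExpansion 1 f).order := by
  have : Fact (IsCusp OnePoint.infty 𝒢) := ⟨𝒢.isCusp_of_mem_strictPeriods one_pos h1⟩
  have hq0 (τ : ℍ) : qParam 1 τ ^ m ≠ 0 := pow_ne_zero _ (Function.Periodic.qParam_ne_zero _)
  let G : ℍ → ℂ := fun τ => f τ * (qParam 1 τ ^ m)⁻¹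
  have hGper : Function.Periodic (G ∘ ofComplex) 1 := fun z => by
    have hf := SlashInvariantFormClass.periodic_comp_ofComplex f h1 z
    have hq := periodic_qParam_comp_ofComplex z
    simp only [Function.comp_apply, ofReal_one] at hf hq
    simp only [Function.comp_apply, G, hf, hq]
  have hGdiff : MDiff G := f.holo'.mul ((mdiff_qParam.pow m).inv hq0)
  have hGbdd : IsBoundedAtImInfty G := by
    have hmul := hO.mul (isBigO_refl (fun τ : ℍ => (qParam 1 τ ^ m)⁻¹) atImInfty)
    simp only [mul_inv_cancel₀ (hq0 _)] at hmul
    exact hmul.trans (isBigO_const_const 1 one_ne_zero _)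
  have hsum (τ : ℍ) : HasSum (fun n => (if m ≤ n then (qExpansion 1 G).coeff (n - m) else 0) •
      qParam 1 τ ^ n) (f τ) := by
    have hfG := (hasSum_qExpansion one_pos (mod_cast hGper) hGdiff hGbdd τ).mul_right
      (qParam 1 τ ^ m)
    rw [show G τ * _ = f τ from inv_mul_cancel_right₀ (hq0 τ) _] at hfG
    rw [← hasSum_nat_add_iff' m, Finset.sum_eq_zero fun n hn => ?_, sub_zero]
    · refine hfG.congr_fun fun n => ?_
      simp [pow_add, mul_assoc]
    · simp [Nat.not_le.mpr (Finset.mem_range.mp hn)]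
  refine PowerSeries.nat_le_order _ _ fun n hn => ?_
  rw [← ModularFormClass.qExpansion_coeff_unique one_pos h1 hsum n, if_neg (Nat.not_le.mpr hn)]

/-- The bundled modular form given by `IsModularForm`. -/
def IsModularForm.toModularForm {Γ : Subgroup SL(2, ℤ)} {k : ℤ} {F : ℍ → ℂ}
    (hF : IsModularForm Γ k F) : ModularForm Γ k where
  toFun := F
  slash_action_eq' := by
    rintro _ ⟨γ, hγ, rfl⟩
    exact hF.slash_eq γ hγ
  holo' := hF.mdiff
  bdd_at_cusps' hc := by
    have hc' := hc.mono (𝒢 := (Γ : Subgroup (GL (Fin 2) ℝ))) (ℋ := 𝒮ℒ) (Subgroup.map_le_range _ _)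
    rw [OnePoint.isBoundedAt_iff_forall_SL2Z hc']
    exact fun γ _ => hF.bdd γ

section

variable {Γ : Subgroup SL(2, ℤ)} [Γ.FiniteIndex] {k : ℤ} {F : ℍ → ℂ}

lemma IsModularForm.isBigO_norm (hF : IsModularForm Γ k F) {m : ℕ}
    (hO : F =O[atImInfty] fun τ => qParam 1 τ ^ m) :
    (ModularForm.norm 𝒮ℒ hF.toModularForm : ℍ → ℂ) =O[atImInfty] fun τ => qParam 1 τ ^ m := by
  classical
  rw [ModularForm.coe_norm]
  let _ := Fintype.ofFinite (𝒮ℒ ⧸ ((Γ : Subgroup (GL (Fin 2) ℝ)).subgroupOf 𝒮ℒ))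
  have hfactor : ∀ c ∈ Finset.univ,
      (fun τ => SlashInvariantForm.quotientFunc (ℋ := 𝒮ℒ) hF.toModularForm c τ) =O[atImInfty]
        fun τ => if c = ⟦1⟧ then qParam 1 τ ^ m else 1 := by
    intro c _
    split_ifs with hc
    · rw [hc, SlashInvariantForm.quotientFunc_mk]
      change (F ∣[k] ((1 : 𝒮ℒ) : GL (Fin 2) ℝ)⁻¹) =O[atImInfty] _
      simpa using hO
    · obtain ⟨⟨_, γ, rfl⟩, rfl⟩ := Quotient.exists_rep c
      rw [SlashInvariantForm.quotientFunc_mk, ← map_inv]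
      exact (hF.bdd γ⁻¹).trans (isBigO_const_const 1 one_ne_zero _)
  rw [Finset.prod_fn]
  simpa using IsBigO.finsetProd hfactor

theorem IsModularForm.eq_zero_of_isBigO {k : ℕ} (hF : IsModularForm Γ k F) {m : ℕ}
    (hm : k * Γ.index < 12 * m) (hO : F =O[atImInfty] fun τ => qParam 1 τ ^ m) : F = 0 := by
  suffices hN : ModularForm.norm 𝒮ℒ hF.toModularForm = 0 from
    (ModularForm.norm_eq_zero_iff 𝒮ℒ hF.toModularForm).mp hN
  have hcard : Nat.card (𝒮ℒ ⧸ ((Γ : Subgroup (GL (Fin 2) ℝ)).subgroupOf 𝒮ℒ)) = Γ.index := by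
    rw [← Subgroup.relIndex_top_right Γ, ← Subgroup.relIndex_map_map_of_injective Γ ⊤
      (mapGL_injective (S := ℝ)), ← MonoidHom.range_eq_map]
    rfl
  have hperiod : (1 : ℝ) ∈ (𝒮ℒ : Subgroup (GL (Fin 2) ℝ)).strictPeriods := by simp
  have horder := le_order_qExpansion _ hperiod (hF.isBigO_norm hO)
  refine ModularForm.sturm_bound_levelOne (lt_of_lt_of_le ?_ horder)
  rw [hcard]
  norm_cast
  exact Nat.div_lt_of_lt_mul hm

end

end SturmBound

section QExpansion

/-- `F` is represented on all of `ℍ` by the convergent series `∑ aₙ qⁿ`. -/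
def HasQExpansion (F : ℍ → ℂ) (a : ℕ → ℂ) : Prop :=
  ∀ τ : ℍ, HasSum (fun n => a n * qParam 1 τ ^ n) (F τ)

/-- The Cauchy product of two coefficient sequences. -/
def convolution {R : Type*} [Semiring R] (a b : ℕ → R) (n : ℕ) : R :=
  ∑ i ∈ Finset.range (n + 1), a i * b (n - i)

lemma hasDerivAt_qParam (z : ℂ) :
    HasDerivAt (qParam 1) (qParam 1 z * (2 * Real.pi * I)) z := by
  have hexp : qParam 1 = fun z => cexp (2 * Real.pi * I * z) := by
    ext z
    simp [qParam]
  rw [hexp]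
  simpa using ((hasDerivAt_id z).const_mul (2 * Real.pi * I)).cexp

namespace HasQExpansion

variable {F G : ℍ → ℂ} {a b : ℕ → ℂ}

lemma add (hF : HasQExpansion F a) (hG : HasQExpansion G b) :
    HasQExpansion (F + G) fun n => a n + b n := fun τ => by
  simpa only [Pi.add_apply, add_mul] using (hF τ).add (hG τ)

lemma smul (r : ℂ) (hF : HasQExpansion F a) : HasQExpansion (r • F) fun n => r * a n := fun τ => by
  simpa only [Pi.smul_apply, smul_eq_mul, mul_assoc] using (hF τ).mul_left r

lemma mul (hF : HasQExpansion F a) (hG : HasQExpansion G b) :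
    HasQExpansion (F * G) (convolution a b) := fun τ => by
  have hprod := hasSum_sum_range_mul_of_summable_norm (hF τ).summable.norm (hG τ).summable.norm
  rw [(hF τ).tsum_eq, (hG τ).tsum_eq] at hprod
  refine hprod.congr_fun fun n => ?_
  rw [convolution, Finset.sum_mul]
  refine Finset.sum_congr rfl fun i hi => ?_
  rw [← pow_mul_pow_sub _ (Finset.mem_range_succ_iff.mp hi)]
  ring

lemma comp_dilate (d : ℕ) [NeZero d] (hF : HasQExpansion F a) :
    HasQExpansion (fun τ => F (dilate d τ)) fun n => if d ∣ n then a (n / d) else 0 := fun τ => by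
  have hinj : Function.Injective (d * · : ℕ → ℕ) := mul_right_injective₀ (NeZero.ne d)
  rw [← hinj.hasSum_iff fun n hn => ?_]
  · refine (hF (dilate d τ)).congr_fun fun n => ?_
    have hq : qParam 1 (dilate d τ) = qParam 1 τ ^ d := by
      rw [qParam, qParam, ← Complex.exp_nat_mul, coe_dilate]
      ring_nf
    simp [hq, pow_mul, Nat.mul_div_cancel_left n (NeZero.pos d)]
  · have hdn : ¬ d ∣ n := fun ⟨m, hm⟩ => hn ⟨m, hm.symm⟩
    simp [hdn]

lemma normalizedDeriv (hF : HasQExpansion F a) : HasQExpansion (D F) fun n => n * a n := fun τ => by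
  let U : Set ℂ := {z | τ.im / 2 < z.im}
  have hU : IsOpen U := isOpen_lt continuous_const continuous_im
  have hτ : (τ : ℂ) ∈ U := half_lt_self τ.im_pos
  have hUpos {z : ℂ} (hz : z ∈ U) : 0 < z.im := (half_pos τ.im_pos).trans hz
  let τ₀ : ℍ := ⟨(τ.im / 2 : ℝ) * I, by simpa using τ.im_pos⟩
  have hbound (n : ℕ) (z : ℂ) (hz : z ∈ U) :
      ‖a n * qParam 1 z ^ n‖ ≤ ‖a n * qParam 1 τ₀ ^ n‖ := by
    have hq : ‖qParam 1 z‖ < ‖qParam 1 τ₀‖ := by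
      rw [Function.Periodic.norm_qParam 1 τ₀, Function.Periodic.norm_qParam_lt_iff one_pos]
      simpa [τ₀] using! hz
    rw [norm_mul, norm_mul, norm_pow, norm_pow]
    gcongr
  have hderiv (n : ℕ) : HasDerivAt (fun z => a n * qParam 1 z ^ n)
      (2 * Real.pi * I * (n * a n * qParam 1 τ ^ n)) τ := by
    refine (((hasDerivAt_qParam τ).pow n).const_mul (a n)).congr_deriv ?_
    cases n with
    | zero => simp
    | succ n => rw [Nat.add_sub_cancel, pow_succ]; ring
  have hsum := hasSum_deriv_of_summable_norm (F := fun n z => a n * qParam 1 z ^ n)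
    (hF τ₀).summable.norm
    (fun n z _ => ((Function.Periodic.differentiable_qParam z).pow n).const_mul (a n)
      |>.differentiableWithinAt) hU hbound hτ
  have heq : (fun z => ∑' n, a n * qParam 1 z ^ n) =ᶠ[𝓝 (τ : ℂ)] F ∘ ofComplex := by
    filter_upwards [hU.mem_nhds hτ] with z hz
    rw [Function.comp_apply, ofComplex_apply_of_im_pos (hUpos hz)]
    exact (hF ⟨z, hUpos hz⟩).tsum_eq
  rw [heq.deriv_eq] at hsum
  refine (hsum.mul_left (2 * Real.pi * I)⁻¹).congr_fun fun n => ?_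
  rw [(hderiv n).deriv, inv_mul_cancel_left₀ Complex.two_pi_I_ne_zero]

lemma isBigO_qParam_pow (hF : HasQExpansion F a) {m : ℕ} (hm : ∀ n < m, a n = 0) :
    F =O[atImInfty] fun τ => qParam 1 τ ^ m := by
  have hq0 (τ : ℍ) : qParam 1 τ ^ m ≠ 0 := pow_ne_zero _ (Function.Periodic.qParam_ne_zero _)
  have htail (τ : ℍ) : HasSum (fun n => a (n + m) • qParam 1 τ ^ n) (F τ * (qParam 1 τ ^ m)⁻¹) := by
    have hshift := (hasSum_nat_add_iff' m).mpr (hF τ)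
    rw [Finset.sum_eq_zero fun n hn => by rw [hm n (Finset.mem_range.mp hn), zero_mul],
      sub_zero] at hshift
    refine (hshift.mul_right (qParam 1 τ ^ m)⁻¹).congr_fun fun n => ?_
    rw [pow_add, smul_eq_mul, ← mul_assoc, mul_inv_cancel_right₀ (hq0 τ)]
  have hbdd : (fun τ => F τ * (qParam 1 τ ^ m)⁻¹) =O[atImInfty] fun _ => (1 : ℂ) :=
    (isBoundedAtImInfty_of_hasSum_qExpansion one_pos htail).trans
      (isBigO_const_const 1 one_ne_zero _)
  simpa [inv_mul_cancel_right₀ (hq0 _)] using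
    hbdd.mul (isBigO_refl (fun τ : ℍ => qParam 1 τ ^ m) atImInfty)

lemma tendsto_div_qParam_pow (hF : HasQExpansion F a) {m : ℕ} (hm : ∀ n < m, a n = 0) :
    Tendsto (fun τ : ℍ => F τ / qParam 1 τ ^ m) atImInfty (𝓝 (a m)) := by
  have hq0 (τ : ℍ) (n : ℕ) : qParam 1 τ ^ n ≠ 0 :=
    pow_ne_zero _ (Function.Periodic.qParam_ne_zero _)
  have htail : HasQExpansion (fun τ => F τ - a m * qParam 1 τ ^ m) (Function.update a m 0) :=
    fun τ => by
      have h := (hF τ).update m 0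
      rw [zero_sub, neg_add_eq_sub] at h
      refine h.congr_fun fun n => ?_
      simp only [Function.update_apply]
      split_ifs <;> simp
  have hO := htail.isBigO_qParam_pow (m := m + 1) fun n hn => by
    rcases (Nat.lt_succ_iff.mp hn).eq_or_lt with rfl | hlt
    · simp
    · rw [Function.update_of_ne hlt.ne, hm n hlt]
  have hquot := hO.mul (isBigO_refl (fun τ : ℍ => (qParam 1 τ ^ m)⁻¹) atImInfty)
  simp only [pow_succ', mul_inv_cancel_right₀ (hq0 _ m)] at hquot
  have hlim := (hquot.trans_tendsto (qParam_tendsto_atImInfty one_pos)).const_add (a m)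
  rw [add_zero] at hlim
  refine hlim.congr fun τ => ?_
  rw [sub_mul, mul_inv_cancel_right₀ (hq0 τ m), add_sub_cancel, div_eq_mul_inv]

end HasQExpansion

/-- The `q`-expansion of `F` is congruent to `∑ cₙ qⁿ` modulo `q ^ N`. The coefficients are rational
so that equality of truncated expansions can be decided. -/
def HasQExpansionMod (N : ℕ) (F : ℍ → ℂ) (c : ℕ → ℚ) : Prop :=
  ∃ a, HasQExpansion F a ∧ ∀ n < N, a n = c n

lemma hasQExpansionMod_E2 (N : ℕ) :
    HasQExpansionMod N E2 fun n => if n = 0 then 1 else -24 * ArithmeticFunction.sigma 1 n := by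
  refine ⟨fun n => if n = 0 then 1 else -24 * ArithmeticFunction.sigma 1 n, fun τ => ?_,
    fun n _ => by dsimp only; split_ifs <;> push_cast <;> rfl⟩
  simpa only [qParam, ofReal_one, div_one, smul_eq_mul] using hasSum_qExpansion_E2 τ

namespace HasQExpansionMod

variable {N : ℕ} {F G : ℍ → ℂ} {c d : ℕ → ℚ}

lemma congr (hF : HasQExpansionMod N F c) (hcd : ∀ n < N, c n = d n) : HasQExpansionMod N F d :=
  let ⟨a, ha, hac⟩ := hF
  ⟨a, ha, fun n hn => hcd n hn ▸ hac n hn⟩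

lemma add (hF : HasQExpansionMod N F c) (hG : HasQExpansionMod N G d) :
    HasQExpansionMod N (F + G) fun n => c n + d n := by
  obtain ⟨a, ha, hac⟩ := hF
  obtain ⟨b, hb, hbd⟩ := hG
  exact ⟨_, ha.add hb, fun n hn => by rw [hac n hn, hbd n hn, Rat.cast_add]⟩

lemma smul (r : ℚ) (hF : HasQExpansionMod N F c) :
    HasQExpansionMod N (r • F) fun n => r * c n := by
  obtain ⟨a, ha, hac⟩ := hF
  rw [← Rat.cast_smul_eq_qsmul ℂ]
  exact ⟨_, ha.smul r, fun n hn => by rw [hac n hn, Rat.cast_mul]⟩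

lemma sub (hF : HasQExpansionMod N F c) (hG : HasQExpansionMod N G d) :
    HasQExpansionMod N (F - G) fun n => c n - d n := by
  simpa [sub_eq_add_neg] using hF.add (hG.smul (-1))

lemma mul (hF : HasQExpansionMod N F c) (hG : HasQExpansionMod N G d) :
    HasQExpansionMod N (F * G) (convolution c d) := by
  obtain ⟨a, ha, hac⟩ := hF
  obtain ⟨b, hb, hbd⟩ := hG
  refine ⟨_, ha.mul hb, fun n hn => ?_⟩
  rw [convolution, convolution, Rat.cast_sum]
  refine Finset.sum_congr rfl fun i hi => ?_
  rw [hac i (by grind), hbd (n - i) (by grind), Rat.cast_mul]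

lemma normalizedDeriv (hF : HasQExpansionMod N F c) :
    HasQExpansionMod N (D F) fun n => n * c n := by
  obtain ⟨a, ha, hac⟩ := hF
  exact ⟨_, ha.normalizedDeriv, fun n hn => by rw [hac n hn]; push_cast; rfl⟩

lemma eisensteinDiff {e : ℕ → ℚ} (hE : HasQExpansionMod N E2 e) (d : ℕ) [NeZero d] :
    HasQExpansionMod N (eisensteinDiff d) fun n => d * (if d ∣ n then e (n / d) else 0) - e n := by
  obtain ⟨a, ha, hae⟩ := id hE
  have hdil : HasQExpansionMod N (E2 ∣[(2 : ℤ)] (dilation d).map (Rat.castHom ℝ))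
      fun n => d * (if d ∣ n then e (n / d) else 0) := by
    have hslash : E2 ∣[(2 : ℤ)] (dilation d).map (Rat.castHom ℝ) =
        (d : ℂ) • fun τ => E2 (dilate d τ) := funext (slash_dilation d E2)
    rw [hslash]
    refine ⟨_, (ha.comp_dilate d).smul d, fun n hn => ?_⟩
    beta_reduce
    rw [hae _ ((Nat.div_le_self n d).trans_lt hn)]
    split_ifs <;> push_cast <;> rfl
  exact hdil.sub hE

end HasQExpansionMod

theorem IsModularForm.eq_of_hasQExpansionMod {Γ : Subgroup SL(2, ℤ)} [Γ.FiniteIndex] {k m : ℕ}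
    {F G : ℍ → ℂ} {c : ℕ → ℚ} (hF : IsModularForm Γ k F) (hG : IsModularForm Γ k G)
    (hm : k * Γ.index < 12 * m) (hFc : HasQExpansionMod m F c) (hGc : HasQExpansionMod m G c) :
    F = G := by
  obtain ⟨a, ha, hac⟩ := hFc.sub hGc
  exact sub_eq_zero.mp <| (hF.sub hG).eq_zero_of_isBigO hm <|
    ha.isBigO_qParam_pow fun n hn => by simp [hac n hn]

end QExpansion

section LevelFourteen

/-- The Eisenstein series of weight two on `Γ₀(14)` fixed by the Atkin–Lehner involution `W₂` and
negated by `W₇`. The newform transforms in the same way, so their quotient is a function on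
`X₀(14) / ⟨W₂, W₇⟩`. -/
def eisensteinW2 : ℍ → ℂ :=
  (1 / 6 : ℚ) • (eisensteinDiff 7 + eisensteinDiff 14 - eisensteinDiff 2)

/-- The Eisenstein series of weight two on `Γ₀(14)` fixed by `W₇` and negated by `W₂`. -/
def eisensteinW7 : ℍ → ℂ :=
  (1 / 8 : ℚ) • (eisensteinDiff 7 - eisensteinDiff 2 - eisensteinDiff 14)

/-- The Eisenstein series of weight two on `Γ₀(14)` fixed by `W₁₄` and negated by `W₂`. -/
def eisensteinW14 : ℍ → ℂ :=
  (1 / 6 : ℚ) • (eisensteinDiff 14 - eisensteinDiff 2 - eisensteinDiff 7)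

/-- The modular part of `newformLogDeriv`. -/
def newformLogDerivForm : ℍ → ℂ :=
  (1 / 24 : ℚ) • (eisensteinDiff 2 + eisensteinDiff 7 + eisensteinDiff 14)

/-- The normalized logarithmic derivative `f' / f` of the newform. -/
def newformLogDeriv : ℍ → ℂ := (1 / 6 : ℚ) • E2 + newformLogDerivForm

/-- The square of the newform, as a combination of squares of Eisenstein series. -/
def newformSq : ℍ → ℂ :=
  (1 / 112 : ℚ) • ((7 : ℚ) • (eisensteinW2 * eisensteinW2) -
    (48 : ℚ) • (eisensteinW7 * eisensteinW7) - (15 : ℚ) • (eisensteinW14 * eisensteinW14))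

/-- The product of the newform and `eisensteinW2`, as a combination of squares of Eisenstein
series. -/
def newformMulEisensteinW2 : ℍ → ℂ :=
  (1 / 224 : ℚ) • ((96 : ℚ) • (eisensteinW7 * eisensteinW7) -
    (7 : ℚ) • (eisensteinW2 * eisensteinW2) - (33 : ℚ) • (eisensteinW14 * eisensteinW14))

section Modularity

lemma isModularForm_eisensteinW2 : IsModularForm (Gamma0 14) 2 eisensteinW2 :=
  ((isModularForm_eisensteinDiff 7 (by norm_num)).add
    (isModularForm_eisensteinDiff 14 (by norm_num))).sub
    (isModularForm_eisensteinDiff 2 (by norm_num)) |>.smul _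

lemma isModularForm_eisensteinW7 : IsModularForm (Gamma0 14) 2 eisensteinW7 :=
  ((isModularForm_eisensteinDiff 7 (by norm_num)).sub
    (isModularForm_eisensteinDiff 2 (by norm_num))).sub
    (isModularForm_eisensteinDiff 14 (by norm_num)) |>.smul _

lemma isModularForm_eisensteinW14 : IsModularForm (Gamma0 14) 2 eisensteinW14 :=
  ((isModularForm_eisensteinDiff 14 (by norm_num)).sub
    (isModularForm_eisensteinDiff 2 (by norm_num))).sub
    (isModularForm_eisensteinDiff 7 (by norm_num)) |>.smul _

lemma isModularForm_newformLogDerivForm : IsModularForm (Gamma0 14) 2 newformLogDerivForm :=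
  ((isModularForm_eisensteinDiff 2 (by norm_num)).add
    (isModularForm_eisensteinDiff 7 (by norm_num))).add
    (isModularForm_eisensteinDiff 14 (by norm_num)) |>.smul _

lemma isModularForm_newformSq : IsModularForm (Gamma0 14) 4 newformSq :=
  have hW2 := isModularForm_eisensteinW2
  have hW7 := isModularForm_eisensteinW7
  have hW14 := isModularForm_eisensteinW14
  (((hW2.mul hW2).smul _).sub ((hW7.mul hW7).smul _)).sub ((hW14.mul hW14).smul _) |>.smul _

lemma isModularForm_newformMulEisensteinW2 :
    IsModularForm (Gamma0 14) 4 newformMulEisensteinW2 :=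
  have hW2 := isModularForm_eisensteinW2
  have hW7 := isModularForm_eisensteinW7
  have hW14 := isModularForm_eisensteinW14
  (((hW7.mul hW7).smul _).sub ((hW2.mul hW2).smul _)).sub ((hW14.mul hW14).smul _) |>.smul _

lemma newformLogDeriv_eq : newformLogDeriv = (1 / 6 : ℂ) • E2 + newformLogDerivForm := by
  simp [newformLogDeriv, ← Rat.cast_smul_eq_qsmul ℂ]

lemma mdiff_newformLogDeriv : MDiff newformLogDeriv := by
  rw [newformLogDeriv_eq]
  exact (E2_mdifferentiable.const_smul _).add isModularForm_newformLogDerivForm.mdiff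

/-- The covariant derivative `F ↦ f ^ (k/2) (F / f ^ (k/2))'` on forms of weight `k` for which the
newform `f` is horizontal. -/
def covariantDeriv (k : ℤ) (F : ℍ → ℂ) : ℍ → ℂ := D F - (k / 2 : ℚ) • (newformLogDeriv * F)

lemma isModularForm_covariantDeriv {k : ℤ} {F : ℍ → ℂ} (hF : IsModularForm (Gamma0 14) k F) :
    IsModularForm (Gamma0 14) (k + 2) (covariantDeriv k F) := by
  have hserre : covariantDeriv k F =
      serreDerivative k F - (k / 2 : ℚ) • (newformLogDerivForm * F) := by
    ext τ
    simp [covariantDeriv, newformLogDeriv, Rat.smul_def]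
    ring
  rw [hserre, add_comm k 2]
  exact (add_comm k 2 ▸ hF.serreDerivative).sub ((isModularForm_newformLogDerivForm.mul hF).smul _)

lemma isModularForm_schwarzian_newform :
    IsModularForm (Gamma0 14) 4
      ((2 : ℚ) • D newformLogDeriv - newformLogDeriv * newformLogDeriv) := by
  have hψ := isModularForm_newformLogDerivForm
  have hserre : (2 : ℚ) • D newformLogDeriv - newformLogDeriv * newformLogDeriv =
      (1 / 3 : ℚ) • serreDerivative 1 E2 + (2 : ℚ) • serreDerivative (2 : ℤ) newformLogDerivForm -
        newformLogDerivForm * newformLogDerivForm := by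
    rw [newformLogDeriv_eq, normalizedDerivOfComplex_add _ _ (E2_mdifferentiable.const_smul _)
      hψ.mdiff, normalizedDerivOfComplex_smul _ _ E2_mdifferentiable]
    ext τ
    simp [Rat.smul_def]
    ring
  rw [hserre]
  exact (((isModularForm_serreDerivative_E2 _).smul _).add (hψ.serreDerivative.smul _)).sub
    (hψ.mul hψ)

end Modularity

section QExpansionTables

lemma hasQExpansionMod_E2_table : HasQExpansionMod 25 E2 fun n =>
    [1, -24, -72, -96, -168, -144, -288, -192, -360, -312, -432, -288, -672, -336, -576, -576, -744,
      -432, -936, -480, -1008, -768, -864, -576, -1440].getD n 0 :=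
  (hasQExpansionMod_E2 25).congr (by decide +kernel)

lemma hasQExpansionMod_newformLogDeriv : HasQExpansionMod 25 newformLogDeriv fun n =>
    [1, -1, -5, -4, -13, -6, -20, -15, -29, -13, -30, -12, -52, -14, -75, -24, -61, -18, -65, -20,
      -78, -60, -60, -24, -116].getD n 0 :=
  have hE := hasQExpansionMod_E2_table
  (hE.smul _).add ((((hE.eisensteinDiff 2).add (hE.eisensteinDiff 7)).add
    (hE.eisensteinDiff 14)).smul _) |>.congr (by decide +kernel)

lemma hasQExpansionMod_eisensteinW2 : HasQExpansionMod 25 eisensteinW2 fun n =>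
    [3, 4, 20, 16, 52, 24, 80, 4, 116, 52, 120, 48, 208, 56, 20, 96, 244, 72, 260, 80, 312, 16, 240,
      96, 464].getD n 0 :=
  have h := hasQExpansionMod_E2_table.eisensteinDiff
  (((h 7).add (h 14)).sub (h 2)).smul _ |>.congr (by decide +kernel)

lemma hasQExpansionMod_eisensteinW7 : HasQExpansionMod 25 eisensteinW7 fun n =>
    [-1, -3, -3, -12, -3, -18, -12, -45, -3, -39, -18, -36, -12, -42, -45, -72, -3, -54, -39, -60,
      -18, -180, -36, -72, -12].getD n 0 :=
  have h := hasQExpansionMod_E2_table.eisensteinDiff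
  (((h 7).sub (h 2)).sub (h 14)).smul _ |>.congr (by decide +kernel)

lemma hasQExpansionMod_eisensteinW14 : HasQExpansionMod 25 eisensteinW14 fun n =>
    [1, -4, -4, -16, -4, -24, -16, -4, -4, -52, -24, -48, -16, -56, -4, -96, -4, -72, -52, -80, -24,
      -16, -48, -96, -16].getD n 0 :=
  have h := hasQExpansionMod_E2_table.eisensteinDiff
  (((h 14).sub (h 2)).sub (h 7)).smul _ |>.congr (by decide +kernel)

lemma hasQExpansionMod_newformSq : HasQExpansionMod 25 newformSq fun n =>
    [0, 0, 1, -2, -3, 6, 2, 0, -1, -12, 4, 4, -2, 2, -7, 16, 17, -4, 1, -38, -24, 14, -16, 32,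
      18].getD n 0 :=
  have hW2 := hasQExpansionMod_eisensteinW2
  have hW7 := hasQExpansionMod_eisensteinW7
  have hW14 := hasQExpansionMod_eisensteinW14
  (((hW2.mul hW2).smul _).sub ((hW7.mul hW7).smul _)).sub ((hW14.mul hW14).smul _)
    |>.smul _ |>.congr (by decide +kernel)

lemma hasQExpansionMod_newformMulEisensteinW2 :
    HasQExpansionMod 25 newformMulEisensteinW2 fun n =>
      [0, 3, 1, 10, -9, 0, -34, -21, -31, 27, 112, -56, 82, 68, -7, -224, 167, 194, -215, -26, -336,
        -70, 56, -112, -66].getD n 0 :=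
  have hW2 := hasQExpansionMod_eisensteinW2
  have hW7 := hasQExpansionMod_eisensteinW7
  have hW14 := hasQExpansionMod_eisensteinW14
  (((hW7.mul hW7).smul _).sub ((hW2.mul hW2).smul _)).sub ((hW14.mul hW14).smul _)
    |>.smul _ |>.congr (by decide +kernel)

lemma hasQExpansionMod_eisensteinW2_sq : HasQExpansionMod 25 (eisensteinW2 * eisensteinW2) fun n =>
    [9, 24, 136, 256, 840, 1200, 3008, 3288, 7400, 6456, 14800, 11296, 26752, 19376, 43976, 29632,
      61832, 43376, 83944, 58432, 116496, 94976, 149600, 105152, 212160].getD n 0 :=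
  have hW2 := hasQExpansionMod_eisensteinW2
  (hW2.mul hW2).congr (by decide +kernel)

end QExpansionTables

section Identities

lemma eq_of_hasQExpansionMod_fourteen {k m : ℕ} {F G : ℍ → ℂ} {c d : ℕ → ℚ}
    (hF : IsModularForm (Gamma0 14) k F) (hG : IsModularForm (Gamma0 14) k G) (hm : 2 * k < m)
    (hFc : HasQExpansionMod m F c) (hGd : HasQExpansionMod m G d) (hcd : ∀ n < m, c n = d n) :
    F = G := by
  refine hF.eq_of_hasQExpansionMod hG (m := m) ?_ (hFc.congr hcd) hGd
  have hindex := Nat.mul_le_mul_left k index_Gamma0_fourteen_le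
  omega

lemma HasQExpansionMod.covariantDeriv {N : ℕ} {F : ℍ → ℂ} {c e : ℕ → ℚ}
    (he : HasQExpansionMod N newformLogDeriv e) (k : ℤ) (hF : HasQExpansionMod N F c) :
    HasQExpansionMod N (covariantDeriv k F) fun n => n * c n - k / 2 * convolution e c n :=
  hF.normalizedDeriv.sub ((he.mul hF).smul _)

theorem covariantDeriv_newformSq : covariantDeriv 4 newformSq = 0 := by
  have hmod := isModularForm_covariantDeriv isModularForm_newformSq
  have hexp := hasQExpansionMod_newformLogDeriv.covariantDeriv 4 hasQExpansionMod_newformSq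
  have hzero : covariantDeriv 4 newformSq = (0 : ℚ) • covariantDeriv 4 newformSq :=
    eq_of_hasQExpansionMod_fourteen (k := 6) hmod (hmod.smul _) (by norm_num) hexp
      (hexp.smul 0) (by decide +kernel)
  rwa [zero_smul] at hzero

theorem newformMulEisensteinW2_sq : newformMulEisensteinW2 * newformMulEisensteinW2 =
    eisensteinW2 * eisensteinW2 * newformSq :=
  have hP := isModularForm_newformSq
  have hQ := isModularForm_newformMulEisensteinW2
  have hS := isModularForm_eisensteinW2.mul isModularForm_eisensteinW2
  eq_of_hasQExpansionMod_fourteen (k := 8) (m := 25) (hQ.mul hQ) (hS.mul hP) (by norm_num)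
    (hasQExpansionMod_newformMulEisensteinW2.mul hasQExpansionMod_newformMulEisensteinW2)
    (hasQExpansionMod_eisensteinW2_sq.mul hasQExpansionMod_newformSq) (by decide +kernel)

theorem schwarzian_newform :
    (9 : ℚ) • ((2 : ℚ) • D newformLogDeriv - newformLogDeriv * newformLogDeriv) =
      (29 : ℚ) • newformSq + (8 : ℚ) • newformMulEisensteinW2 - eisensteinW2 * eisensteinW2 :=
  have hP := isModularForm_newformSq
  have hQ := isModularForm_newformMulEisensteinW2
  have hS := isModularForm_eisensteinW2.mul isModularForm_eisensteinW2
  have hφ := hasQExpansionMod_newformLogDeriv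
  eq_of_hasQExpansionMod_fourteen (k := 4) (m := 25) (isModularForm_schwarzian_newform.smul _)
    (((hP.smul _).add (hQ.smul _)).sub hS) (by norm_num)
    (((hφ.normalizedDeriv.smul _).sub (hφ.mul hφ)).smul _)
    (((hasQExpansionMod_newformSq.smul _).add (hasQExpansionMod_newformMulEisensteinW2.smul _)).sub
      hasQExpansionMod_eisensteinW2_sq) (by decide +kernel)

theorem covariantDeriv_newformMulEisensteinW2_sq :
    (9 : ℚ) • (covariantDeriv 4 newformMulEisensteinW2 * covariantDeriv 4 newformMulEisensteinW2) =
      newformSq *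
        ((eisensteinW2 * eisensteinW2 + (10 : ℚ) • newformMulEisensteinW2 - (11 : ℚ) • newformSq) *
        (eisensteinW2 * eisensteinW2 - (32 : ℚ) • newformMulEisensteinW2 - (32 : ℚ) • newformSq)) :=
  have hP := isModularForm_newformSq
  have hQ := isModularForm_newformMulEisensteinW2
  have hS := isModularForm_eisensteinW2.mul isModularForm_eisensteinW2
  have hR := isModularForm_covariantDeriv hQ
  have hP' := hasQExpansionMod_newformSq
  have hQ' := hasQExpansionMod_newformMulEisensteinW2
  have hS' := hasQExpansionMod_eisensteinW2_sq
  have hR' := hasQExpansionMod_newformLogDeriv.covariantDeriv 4 hQ'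
  eq_of_hasQExpansionMod_fourteen (k := 12) (m := 25) ((hR.mul hR).smul _)
    (hP.mul (((hS.add (hQ.smul _)).sub (hP.smul _)).mul ((hS.sub (hQ.smul _)).sub (hP.smul _))))
    (by norm_num) ((hR'.mul hR').smul _)
    (hP'.mul (((hS'.add (hQ'.smul _)).sub (hP'.smul _)).mul
      ((hS'.sub (hQ'.smul _)).sub (hP'.smul _)))) (by decide +kernel)

end Identities

end LevelFourteen

section EtaProduct

/-- The Euler product `∏ (1 - qⁿ)`. -/
def eulerProduct (q : ℂ) : ℂ := ∏' n : ℕ, (1 - q ^ (n + 1))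

lemma tendsto_eulerProduct : Tendsto eulerProduct (𝓝 0) (𝓝 1) := by
  have hcont : ContinuousAt eulerProduct 0 :=
    (ModularForm.differentiableOn_tprod_one_sub_pow.differentiableAt
      (Metric.ball_mem_nhds 0 one_pos)).continuousAt
  simpa [eulerProduct] using hcont.tendsto

lemma qParam_natCast_mul (h : ℝ) (d : ℕ) (z : ℂ) : qParam h (d * z) = qParam h z ^ d := by
  rw [qParam, qParam, ← Complex.exp_nat_mul]
  ring_nf

lemma eta_natCast_mul (d : ℕ) (z : ℂ) :
    η (d * z) = qParam 24 z ^ d * eulerProduct (qParam 1 z ^ d) := by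
  rw [← qParam_natCast_mul, ← qParam_natCast_mul]
  rfl

lemma f14_eq_qParam_mul_prod (τ : ℍ) :
    f14 τ = qParam 1 τ * ∏ d ∈ Nat.divisors 14, eulerProduct (qParam 1 τ ^ d) := by
  have hqq : qq τ = qParam 1 τ := by simp [qq, qParam]
  have hmul (d : ℕ) [NeZero d] : Multipliable fun n : ℕ => 1 - qParam 1 τ ^ (d * (n + 1)) := by
    simp only [pow_mul]
    refine ModularForm.multipliable_one_sub_pow ?_
    rw [norm_pow]
    exact pow_lt_one₀ (norm_nonneg _) (by simpa using norm_qParam_lt_one 1 τ) (NeZero.ne d)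
  have h1 := by simpa only [one_mul] using hmul 1
  rw [f14, hqq, ((h1.mul (hmul 2)).mul (hmul 7)).tprod_mul (hmul 14),
    (h1.mul (hmul 2)).tprod_mul (hmul 7), h1.tprod_mul (hmul 2)]
  simp [Nat.divisors_ofNat, eulerProduct, ← pow_mul, mul_assoc]

lemma f14_eq_prod_eta (τ : ℍ) : f14 τ = ∏ d ∈ Nat.divisors 14, η (d * τ) := by
  have hq : ∏ d ∈ Nat.divisors 14, qParam 24 τ ^ d = qParam 1 τ :=
    calc ∏ d ∈ Nat.divisors 14, qParam 24 τ ^ d = qParam 24 τ ^ (∑ d ∈ Nat.divisors 14, d) :=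
          Finset.prod_pow_eq_pow_sum _ _ _
      _ = qParam 24 τ ^ 24 := rfl
      _ = qParam 1 τ := by
          rw [qParam, qParam, ← Complex.exp_nat_mul]
          congr 1
          push_cast
          ring
  simp only [eta_natCast_mul, Finset.prod_mul_distrib, hq, f14_eq_qParam_mul_prod]

lemma eta_natCast_mul_ne_zero (d : ℕ) [NeZero d] (τ : ℍ) : η (d * τ) ≠ 0 := by
  rw [← coe_dilate]
  exact ModularForm.eta_ne_zero (dilate d τ).im_pos

lemma differentiableAt_eta_natCast_mul (d : ℕ) [NeZero d] (τ : ℍ) :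
    DifferentiableAt ℂ (fun z => η (d * z)) τ := by
  refine DifferentiableAt.comp (g := η) _ ?_ (by fun_prop)
  rw [← coe_dilate]
  exact ModularForm.differentiableAt_eta_of_mem_upperHalfPlaneSet (dilate d τ).im_pos

lemma logDeriv_eta_natCast_mul (d : ℕ) [NeZero d] (τ : ℍ) :
    logDeriv (fun z => η (d * z)) τ = 2 * Real.pi * I * (d * E2 (dilate d τ) / 24) := by
  have hη := ModularForm.differentiableAt_eta_of_mem_upperHalfPlaneSet (dilate d τ).im_pos
  have hcomp := logDeriv_comp (g := fun z : ℂ => d * z) (x := (τ : ℂ)) (coe_dilate d τ ▸ hη)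
    (by fun_prop)
  rw [← coe_dilate, ModularForm.logDeriv_eta_eq_E2] at hcomp
  refine hcomp.trans ?_
  simp
  ring

lemma f14_ne_zero (τ : ℍ) : f14 τ ≠ 0 := by
  rw [f14_eq_prod_eta]
  refine Finset.prod_ne_zero_iff.mpr fun d hd => ?_
  have : NeZero d := ⟨(Nat.pos_of_mem_divisors hd).ne'⟩
  exact eta_natCast_mul_ne_zero d τ

lemma f14_eventuallyEq (τ : ℍ) :
    f14 =ᶠ[𝓝 (τ : ℂ)] fun z => ∏ d ∈ Nat.divisors 14, η (d * z) := by
  filter_upwards [isOpen_upperHalfPlaneSet.mem_nhds τ.im_pos] with z hz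
  exact f14_eq_prod_eta ⟨z, hz⟩

lemma differentiableAt_f14 (τ : ℍ) : DifferentiableAt ℂ f14 τ := by
  refine (f14_eventuallyEq τ).differentiableAt_iff.mpr
    (DifferentiableAt.fun_finsetProd fun d hd => ?_)
  have : NeZero d := ⟨(Nat.pos_of_mem_divisors hd).ne'⟩
  exact differentiableAt_eta_natCast_mul d τ

lemma logDeriv_f14 (τ : ℍ) : logDeriv f14 τ = 2 * Real.pi * I * newformLogDeriv τ := by
  have hne (d : ℕ) (hd : d ∈ Nat.divisors 14) : NeZero d := ⟨(Nat.pos_of_mem_divisors hd).ne'⟩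
  have hone : dilate 1 τ = τ := by ext; simp [coe_dilate]
  have hsum : logDeriv f14 τ = ∑ d ∈ Nat.divisors 14, logDeriv (fun z => η (d * z)) τ := by
    rw [(logDeriv_congr_nhds (f14_eventuallyEq τ)).eq_of_nhds]
    exact logDeriv_prod (fun d hd => have := hne d hd; eta_natCast_mul_ne_zero d τ)
      (fun d hd => have := hne d hd; differentiableAt_eta_natCast_mul d τ)
  rw [hsum, show Nat.divisors 14 = {1, 2, 7, 14} from rfl, Finset.sum_insert (by decide),
    Finset.sum_insert (by decide), Finset.sum_insert (by decide), Finset.sum_singleton,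
    logDeriv_eta_natCast_mul, logDeriv_eta_natCast_mul, logDeriv_eta_natCast_mul,
    logDeriv_eta_natCast_mul, hone]
  simp [newformLogDeriv, newformLogDerivForm, eisensteinDiff, slash_dilation, Rat.smul_def]
  ring

lemma hasDerivAt_f14 (τ : ℍ) :
    HasDerivAt f14 (2 * Real.pi * I * (newformLogDeriv τ * f14 τ)) τ := by
  refine (differentiableAt_f14 τ).hasDerivAt.congr_deriv ?_
  rw [← mul_assoc, ← logDeriv_f14, logDeriv_apply, div_mul_cancel₀ _ (f14_ne_zero τ)]

lemma tendsto_f14_div_qParam : Tendsto (fun τ : ℍ => f14 τ / qParam 1 τ) atImInfty (𝓝 1) := by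
  have hprod : Tendsto (fun τ : ℍ => ∏ d ∈ Nat.divisors 14, eulerProduct (qParam 1 τ ^ d))
      atImInfty (𝓝 (∏ _ ∈ Nat.divisors 14, 1)) := by
    refine tendsto_finsetProd _ fun d hd => tendsto_eulerProduct.comp ?_
    rw [← zero_pow (Nat.pos_of_mem_divisors hd).ne']
    exact (qParam_tendsto_atImInfty one_pos).pow d
  rw [Finset.prod_const_one] at hprod
  refine hprod.congr fun τ => ?_
  rw [f14_eq_qParam_mul_prod, mul_div_cancel_left₀ _ (Function.Periodic.qParam_ne_zero _)]

end EtaProduct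

section NewformSquare

lemma hasDerivAt_comp_ofComplex {F : ℍ → ℂ} (hF : MDiff F) (τ : ℍ) :
    HasDerivAt (F ∘ ofComplex) (2 * Real.pi * I * D F τ) τ := by
  rw [normalizedDerivOfComplex, mul_inv_cancel_left₀ two_pi_I_ne_zero]
  exact (UpperHalfPlane.mdifferentiableAt_iff.mp (hF τ)).hasDerivAt

lemma hasDerivAt_div_f14_sq {F : ℍ → ℂ} (hF : MDiff F) (τ : ℍ) :
    HasDerivAt (fun z => F (ofComplex z) / f14 z ^ 2)
      (2 * Real.pi * I * (covariantDeriv 4 F τ / f14 τ ^ 2)) τ := by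
  have hf := f14_ne_zero τ
  refine ((hasDerivAt_comp_ofComplex hF τ).div ((hasDerivAt_f14 τ).pow 2)
    (pow_ne_zero 2 hf)).congr_deriv ?_
  simp [covariantDeriv, Rat.smul_def]
  field_simp
  ring

lemma tendsto_newformSq_div_qParam_sq :
    Tendsto (fun τ : ℍ => newformSq τ / qParam 1 τ ^ 2) atImInfty (𝓝 1) := by
  obtain ⟨a, ha, hac⟩ := hasQExpansionMod_newformSq
  have h2 := ha.tendsto_div_qParam_pow (m := 2) fun n hn => by
    rw [hac n (by omega)]
    interval_cases n <;> simp
  simpa [hac 2] using h2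

theorem newformSq_eq_f14_sq (τ : ℍ) : newformSq τ = f14 τ ^ 2 := by
  have hderiv (z : ℂ) (hz : z ∈ upperHalfPlaneSet) :
      HasDerivAt (fun z => newformSq (ofComplex z) / f14 z ^ 2) 0 z := by
    simpa [covariantDeriv_newformSq] using
      hasDerivAt_div_f14_sq isModularForm_newformSq.mdiff ⟨z, hz⟩
  obtain ⟨c, hc⟩ := isOpen_upperHalfPlaneSet.exists_is_const_of_deriv_eq_zero
    (convex_halfSpace_im_gt 0).isPreconnected
    (fun z hz => (hderiv z hz).differentiableAt.differentiableWithinAt)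
    (fun z hz => (hderiv z hz).deriv)
  have hratio (τ : ℍ) : newformSq τ = c * f14 τ ^ 2 := by
    rw [← div_eq_iff (pow_ne_zero 2 (f14_ne_zero τ)), ← hc τ τ.im_pos, ofComplex_apply]
  have hc1 : c = 1 := by
    have hlim := (tendsto_f14_div_qParam.pow 2).const_mul c
    rw [one_pow, mul_one] at hlim
    refine tendsto_nhds_unique (hlim.congr fun τ => ?_) tendsto_newformSq_div_qParam_sq
    rw [hratio, div_pow, mul_div_assoc]
  rw [hratio, hc1, one_mul]

end NewformSquare

section Invariants

lemma J2_eq {f : ℂ → ℂ} {τ : ℂ} (hf : AnalyticAt ℂ f τ) (h0 : f τ ≠ 0) :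
    J2 f τ = 2 * nderiv (I2 f) τ / f τ := by
  have hnderiv {g : ℂ → ℂ} (hg : AnalyticAt ℂ g τ) : AnalyticAt ℂ (nderiv g) τ :=
    analyticAt_const.mul hg.deriv
  have hasDeriv {g : ℂ → ℂ} (hg : AnalyticAt ℂ g τ) :
      HasDerivAt g (2 * Real.pi * I * nderiv g τ) τ := by
    rw [nderiv, mul_inv_cancel_left₀ two_pi_I_ne_zero]
    exact hg.differentiableAt.hasDerivAt
  have h := hasDeriv hf
  have h' := hasDeriv (hnderiv hf)
  have h'' := hasDeriv (hnderiv (hnderiv hf))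
  have hI2 := (((h.const_mul 2).mul h'').sub ((h'.pow 2).const_mul 3)).div (h.pow 4)
    (pow_ne_zero 4 h0)
  have hderiv : nderiv (I2 f) τ = _ := congrArg ((2 * Real.pi * I)⁻¹ * ·) hI2.deriv
  rw [J2, hderiv]
  simp only [Pi.mul_apply, Pi.pow_apply, Pi.sub_apply]
  field_simp
  ring

lemma I2_eq {f φ : ℂ → ℂ} {τ : ℂ} (hf : DifferentiableAt ℂ f τ) (hφ : DifferentiableAt ℂ φ τ)
    (h : nderiv f =ᶠ[𝓝 τ] φ * f) (h0 : f τ ≠ 0) :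
    I2 f τ = (2 * nderiv φ τ - φ τ ^ 2) / f τ ^ 2 := by
  have h' : nderiv f τ = φ τ * f τ := h.eq_of_nhds
  have h'' : nderiv (nderiv f) τ = nderiv φ τ * f τ + φ τ * (φ τ * f τ) := by
    rw [← h', nderiv, h.deriv_eq, deriv_mul hφ hf, nderiv, nderiv]
    ring
  rw [I2, h', h'']
  field_simp
  ring

/-- The coordinate `x` of the elliptic curve `9 y² = (x - 1)(x + 11)(x² - 32 x - 32)`, a model of
`X₀(14) / W₂`; it is the quotient of `eisensteinW2` by the newform. -/
def xCoord (z : ℂ) : ℂ := newformMulEisensteinW2 (ofComplex z) / f14 z ^ 2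

/-- The coordinate `y` of the same curve, for which `dx / y` is the invariant differential given by
the newform. -/
def yCoord (z : ℂ) : ℂ := nderiv xCoord z / f14 z

lemma hasDerivAt_xCoord (τ : ℍ) : HasDerivAt xCoord (2 * Real.pi * I * (yCoord τ * f14 τ)) τ := by
  have h := hasDerivAt_div_f14_sq isModularForm_newformMulEisensteinW2.mdiff τ
  have hn : nderiv xCoord τ = yCoord τ * f14 τ := (div_mul_cancel₀ _ (f14_ne_zero τ)).symm
  rw [← hn, nderiv, mul_inv_cancel_left₀ two_pi_I_ne_zero]
  exact h.differentiableAt.hasDerivAt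

lemma yCoord_eq (τ : ℍ) :
    yCoord τ = covariantDeriv 4 newformMulEisensteinW2 τ / f14 τ ^ 3 := by
  have h := hasDerivAt_div_f14_sq isModularForm_newformMulEisensteinW2.mdiff τ
  rw [pow_succ, ← div_div, ← inv_mul_cancel_left₀ two_pi_I_ne_zero (_ / f14 τ ^ 2)]
  exact congrArg (fun w => (2 * Real.pi * I)⁻¹ * w / f14 τ) h.deriv

lemma newformMulEisensteinW2_eq (τ : ℍ) : newformMulEisensteinW2 τ = xCoord τ * f14 τ ^ 2 := by
  rw [xCoord, ofComplex_apply, div_mul_cancel₀ _ (pow_ne_zero 2 (f14_ne_zero τ))]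

lemma eisensteinW2_mul_self_eq (τ : ℍ) :
    eisensteinW2 τ * eisensteinW2 τ = xCoord τ ^ 2 * f14 τ ^ 2 := by
  have h := congrFun newformMulEisensteinW2_sq τ
  simp only [Pi.mul_apply, newformMulEisensteinW2_eq, newformSq_eq_f14_sq] at h
  refine mul_right_cancel₀ (pow_ne_zero 2 (f14_ne_zero τ)) ?_
  linear_combination -h

theorem nine_mul_yCoord_sq (τ : ℍ) :
    9 * yCoord τ ^ 2 = (xCoord τ - 1) * (xCoord τ + 11) *
      (xCoord τ ^ 2 - 32 * xCoord τ - 32) := by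
  have h := congrFun covariantDeriv_newformMulEisensteinW2_sq τ
  have hf := f14_ne_zero τ
  simp only [Pi.mul_apply, Pi.add_apply, Pi.sub_apply, Pi.smul_apply, Rat.smul_def,
    newformMulEisensteinW2_eq, newformSq_eq_f14_sq, eisensteinW2_mul_self_eq] at h
  push_cast at h
  rw [← pow_two] at h
  rw [yCoord_eq, div_pow, ← mul_div_assoc, h]
  field_simp
  ring

lemma analyticAt_f14 (τ : ℍ) : AnalyticAt ℂ f14 τ :=
  DifferentiableOn.analyticAt
    (fun z hz => (differentiableAt_f14 ⟨z, hz⟩).differentiableWithinAt)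
    (isOpen_upperHalfPlaneSet.mem_nhds τ.im_pos)

lemma nderiv_f14_eventuallyEq (τ : ℍ) :
    nderiv f14 =ᶠ[𝓝 (τ : ℂ)] (newformLogDeriv ∘ ofComplex) * f14 := by
  filter_upwards [isOpen_upperHalfPlaneSet.mem_nhds τ.im_pos] with z hz
  rw [nderiv, (hasDerivAt_f14 ⟨z, hz⟩).deriv, inv_mul_cancel_left₀ two_pi_I_ne_zero,
    Pi.mul_apply, Function.comp_apply, ofComplex_apply_of_im_pos hz]

theorem I2_f14 (τ : ℍ) : I2 f14 τ = (29 + 8 * xCoord τ - xCoord τ ^ 2) / 9 := by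
  have hφ := (hasDerivAt_comp_ofComplex mdiff_newformLogDeriv τ).differentiableAt
  have hf := f14_ne_zero τ
  have h := congrFun schwarzian_newform τ
  simp only [Pi.mul_apply, Pi.add_apply, Pi.sub_apply, Pi.smul_apply, Rat.smul_def,
    newformMulEisensteinW2_eq, newformSq_eq_f14_sq, eisensteinW2_mul_self_eq] at h
  push_cast at h
  have hD : nderiv (newformLogDeriv ∘ ofComplex) τ = D newformLogDeriv τ := rfl
  rw [I2_eq (differentiableAt_f14 τ) hφ (nderiv_f14_eventuallyEq τ) hf, hD,
    Function.comp_apply, ofComplex_apply, div_eq_div_iff (pow_ne_zero 2 hf) (by norm_num)]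
  linear_combination h

theorem J2_f14 (τ : ℍ) : J2 f14 τ = 4 / 9 * (4 - xCoord τ) * yCoord τ := by
  have hI2 : I2 f14 =ᶠ[𝓝 (τ : ℂ)] fun z => (29 + 8 * xCoord z - xCoord z ^ 2) / 9 := by
    filter_upwards [isOpen_upperHalfPlaneSet.mem_nhds τ.im_pos] with z hz
    exact I2_f14 ⟨z, hz⟩
  have hx := hasDerivAt_xCoord τ
  have hderiv := (((hx.const_mul 8).const_add 29).fun_sub (hx.fun_pow 2)).div_const 9
  have hf := f14_ne_zero τ
  rw [J2_eq (analyticAt_f14 τ) hf, nderiv, hI2.deriv_eq, hderiv.deriv]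
  have := two_pi_I_ne_zero
  field_simp
  ring

end Invariants

end Newform14
end

/-- The newform of weight two on `Γ₀(14)` satisfies an algebraic relation between
its differential invariants `I₂` and `J₂`. -/
theorem newform14_invariant_relation :
    ∀ τ : ℂ, 0 < τ.im →
      J2 f14 τ ^ 4 +
      32 * (I2 f14 τ - 5) * (I2 f14 τ ^ 2 + 49 * I2 f14 τ - 350) * J2 f14 τ ^ 2 +
      256 * (I2 f14 τ + 20) * (I2 f14 τ - 4) *
        (I2 f14 τ ^ 2 + 86 * I2 f14 τ - 199) * (I2 f14 τ - 5) ^ 2 = 0 := by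
  intro z hz
  obtain ⟨τ, rfl⟩ : ∃ τ : UpperHalfPlane, (τ : ℂ) = z := ⟨⟨z, hz⟩, rfl⟩
  set x := Newform14.xCoord τ with hx
  have hI : I2 f14 τ = (29 + 8 * x - x ^ 2) / 9 := Newform14.I2_f14 τ
  have hJsq : J2 f14 τ ^ 2 =
      16 / 729 * (4 - x) ^ 2 * ((x - 1) * (x + 11) * (x ^ 2 - 32 * x - 32)) := by
    rw [Newform14.J2_f14, hx, ← Newform14.nine_mul_yCoord_sq]
    ring
  rw [show J2 f14 τ ^ 4 = (J2 f14 τ ^ 2) ^ 2 by ring, hJsq, hI]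
  ring
end
end
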